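/- Let G be a finitely generated group, γ₁,…,γ_n representatives of distinct conjugacy classes of indivisible elements of G with γᵢ not conjugate to γⱼ^{±1} for i ≠ j, and let G' = ⟨G, s₁,…,s_n | sᵢ^{kᵢ} = γᵢ⟩ with kᵢ ≥ 2. If H is any quotient of G' into which G embeds, then scott(G) ≥ scott(H) in the ordering on Scott complexities. -/

import Mathlib

/-- A group is freely indecomposable if in any free product decomposition one
of the factors is trivial. -/
def FreelyIndecomposable (G : Type) [Group G] : Prop :=
  ∀ (A B : Type) (_ : Group A) (_ : Group B),
    Nonempty (G ≃* Monoid.Coprod A B) → Subsingleton A ∨ Subsingleton B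

/-- `HasScott G a p` : `G` has a Grushko decomposition
`G ≅ G₁ * ⋯ * G_p * F_q` with each `Gᵢ` nontrivial, freely indecomposable and
not infinite cyclic, and `a = q - 1`. -/
def HasScott (G : Type) [Group G] (a : ℤ) (p : ℕ) : Prop :=
  ∃ (q : ℕ) (H : Fin p → Type) (_ : ∀ i, Group (H i)),
    a = (q : ℤ) - 1 ∧
    (∀ i, Nontrivial (H i)) ∧
    (∀ i, FreelyIndecomposable (H i)) ∧
    (∀ i, IsEmpty (H i ≃* Multiplicative ℤ)) ∧
    Nonempty (G ≃* Monoid.Coprod (Monoid.CoprodI H) (FreeGroup (Fin q)))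

/-- The order on Scott complexities `(q - 1, p)`. -/
def ScottLE (x y : ℤ × ℕ) : Prop :=
  x.1 < y.1 ∨ (x.1 = y.1 ∧ x.2 ≤ y.2)

/-- `x` is indivisible: it is not a proper power. -/
def Indivisible {G : Type} [Group G] (x : G) : Prop :=
  ∀ (u : G) (j : ℕ), 2 ≤ j → u ^ j ≠ x

/-- The group `G' = ⟨G, s₁, …, s_n | sᵢ^{kᵢ} = γᵢ⟩` obtained from `G` by
adjoining roots of the elements `γᵢ`. -/
abbrev AdjoinRoots (G : Type) [Group G] {nn : ℕ} (γ : Fin nn → G)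
    (k : Fin nn → ℕ) : Type :=
  (Monoid.Coprod G (FreeGroup (Fin nn))) ⧸
    Subgroup.normalClosure
      {x | ∃ i, x = (Monoid.Coprod.inr (FreeGroup.of i)) ^ (k i) *
        (Monoid.Coprod.inl (γ i))⁻¹}

/-- The natural map `G → G'`. -/
def adjoinRootsIncl (G : Type) [Group G] {nn : ℕ} (γ : Fin nn → G)
    (k : Fin nn → ℕ) : G →* AdjoinRoots G γ k :=
  (QuotientGroup.mk' _).comp Monoid.Coprod.inl


section

def Split {G : Type} [Group G] {I Y : Type} (A : I → Subgroup G) (y : Y → G) : Prop :=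
  (∀ (X : Type) (_ : Group X) (φ : ∀ i, A i →* X) (f : Y → X),
    ∃ Φ : G →* X, (∀ i (a : A i), Φ a = φ i a) ∧ ∀ t, Φ (y t) = f t) ∧
  Subgroup.closure ((⋃ i, (A i : Set G)) ∪ Set.range y) = ⊤

/-- Transversal data for the Kurosh subgroup theorem. -/
structure KData {H : Type} [Group H] {J : Type} (B : J → Subgroup H) (G : Subgroup H) where
  base : J → H ⧸ G → H ⧸ G
  t : J → H ⧸ G → H
  p : H ⧸ G → H
  base_smul : ∀ j b ω, b ∈ B j → base j (b • ω) = base j ω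
  t_mem : ∀ j ω, t j ω ∈ B j
  t_smul : ∀ j ω, t j ω • base j ω = ω
  t_one : ∀ j ω, base j ω = ω → t j ω = 1
  p_smul : ∀ ω, p ω • ((1 : H) : H ⧸ G) = ω
  p_one : p ((1 : H) : H ⧸ G) = 1
  ind : ∀ P : H ⧸ G → Prop, P ((1 : H) : H ⧸ G) →
    (∀ j ω, t j ω * p (base j ω) = p ω → P (base j ω) → P ω) → ∀ ω, P ω

namespace KData
variable {H : Type} [Group H] {J : Type} {B : J → Subgroup H} {G : Subgroup H} (D : KData B G)

theorem base_base (j : J) (ω : H ⧸ G) : D.base j (D.base j ω) = D.base j ω := by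
  conv_rhs => rw [← D.t_smul j ω]
  rw [D.base_smul _ _ _ (D.t_mem j ω)]

theorem t_base (j : J) (ω : H ⧸ G) : D.t j (D.base j ω) = 1 := D.t_one _ _ (D.base_base _ _)

theorem mem_iff (h : H) : h ∈ G ↔ h • ((1 : H) : H ⧸ G) = ((1 : H) : H ⧸ G) := by
  rw [MulAction.Quotient.smul_coe, smul_eq_mul, mul_one, eq_comm, QuotientGroup.eq]
  simp

theorem p_inv_smul (ω : H ⧸ G) : (D.p ω)⁻¹ • ω = ((1 : H) : H ⧸ G) := by
  rw [inv_smul_eq_iff, D.p_smul]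

/-- Edge elements. -/
def e (j : J) (ω : H ⧸ G) : H := (D.p ω)⁻¹ * D.t j ω * D.p (D.base j ω)

theorem e_mem (j : J) (ω : H ⧸ G) : D.e j ω ∈ G := by
  rw [mem_iff, e, mul_smul, mul_smul, D.p_smul, D.t_smul, D.p_inv_smul]

theorem e_eq_one (j : J) (ω : H ⧸ G) : D.e j ω = 1 ↔ D.t j ω * D.p (D.base j ω) = D.p ω := by
  rw [e, mul_assoc, inv_mul_eq_one, eq_comm]

abbrev I := {x : J × (H ⧸ G) // D.base x.1 x.2 = x.2}
abbrev Y := {x : J × (H ⧸ G) // D.e x.1 x.2 ≠ 1}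

def A (i : D.I) : Subgroup G :=
  ((B i.1.1).comap (MulAut.conj (D.p i.1.2)).toMonoidHom).subgroupOf G

theorem mem_A (i : D.I) (a : G) : a ∈ D.A i ↔ D.p i.1.2 * a * (D.p i.1.2)⁻¹ ∈ B i.1.1 := by
  simp [A, Subgroup.mem_subgroupOf]

def y (i : D.Y) : G := ⟨D.e i.1.1 i.1.2, D.e_mem _ _⟩

/-- the loop at `base` -/
theorem loop_eq (j : J) (ω : H ⧸ G) (b : H) :
    (D.t j (b • ω))⁻¹ * b * D.t j ω ∈ B j ↔ b ∈ B j := by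
  rw [Subgroup.mul_mem_cancel_right _ (D.t_mem _ _),
    Subgroup.mul_mem_cancel_left _ ((B j).inv_mem (D.t_mem _ _))]

theorem gen (hB : Subgroup.closure (⋃ i, (B i : Set H)) = ⊤) :
    Subgroup.closure ((⋃ i, (D.A i : Set G)) ∪ Set.range D.y) = ⊤ := by
  set K := Subgroup.closure ((⋃ i, (D.A i : Set G)) ∪ Set.range D.y) with hK
  have hmem : ∀ (h : H) (ω : H ⧸ G), (D.p (h • ω))⁻¹ * h * D.p ω ∈ G := by
    intro h ω
    rw [mem_iff, mul_smul, mul_smul, D.p_smul, D.p_inv_smul]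
  have he : ∀ j ω, (⟨D.e j ω, D.e_mem j ω⟩ : G) ∈ K := by
    intro j ω
    by_cases h : D.e j ω = 1
    · have : (⟨D.e j ω, D.e_mem j ω⟩ : G) = 1 := by ext; exact h
      rw [this]; exact K.one_mem
    · exact Subgroup.subset_closure (Or.inr ⟨⟨(j, ω), h⟩, rfl⟩)
  have key : ∀ h : H, ∀ ω, (⟨_, hmem h ω⟩ : G) ∈ K := by
    intro h
    have hh : h ∈ Subgroup.closure (⋃ i, (B i : Set H)) := by rw [hB]; trivial
    induction hh using Subgroup.closure_induction with
    | mem b hb =>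
      obtain ⟨j, hb⟩ := Set.mem_iUnion.1 hb
      intro ω
      have hb' : b ∈ B j := hb
      -- middle element
      have hbase : D.base j (b • ω) = D.base j ω := D.base_smul _ _ _ hb'
      set m : H := (D.p (D.base j ω))⁻¹ * ((D.t j (b • ω))⁻¹ * b * D.t j ω) * D.p (D.base j ω)
        with hm
      have hmG : m ∈ G := by
        rw [mem_iff, hm]
        simp only [mul_smul]
        rw [D.p_smul, D.t_smul]
        have : (D.t j (b • ω))⁻¹ • b • ω = D.base j ω := by
          rw [inv_smul_eq_iff, ← hbase, D.t_smul]
        rw [this, D.p_inv_smul]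
      have hmK : (⟨m, hmG⟩ : G) ∈ K := by
        refine Subgroup.subset_closure (Or.inl (Set.mem_iUnion.2
          ⟨⟨(j, D.base j ω), D.base_base _ _⟩, ?_⟩))
        rw [SetLike.mem_coe, D.mem_A]
        simp only [hm]
        have := (D.loop_eq j ω b).2 hb'
        convert this using 1
        group
      have := K.mul_mem (K.mul_mem (he j (b • ω)) hmK) (K.inv_mem (he j ω))
      convert this using 1
      ext
      simp only [Subgroup.coe_mul, Subgroup.coe_inv, hm, e, hbase]
      group
    | one =>
      intro ω
      convert K.one_mem using 1
      ext
      simp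
    | mul h1 h2 _ _ ih1 ih2 =>
      intro ω
      convert K.mul_mem (ih1 (h2 • ω)) (ih2 ω) using 1
      ext
      simp [mul_smul]
      group
    | inv h _ ih =>
      intro ω
      convert K.inv_mem (ih (h⁻¹ • ω)) using 1
      ext
      simp
      group
  rw [eq_top_iff]
  intro g _
  have := key g ((1 : H) : H ⧸ G)
  convert this using 1
  ext
  simp only [(mem_iff (G := G) (g : H)).1 g.2, D.p_one]
  simp

open Classical in
theorem univ (hB : Split B (Empty.elim : Empty → H)) (X : Type) [Group X]
    (φ : ∀ i, D.A i →* X) (f : D.Y → X) :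
    ∃ Φ : G →* X, (∀ i (a : D.A i), Φ a = φ i a) ∧ ∀ t, Φ (D.y t) = f t := by
  let o : H ⧸ G := ((1 : H) : H ⧸ G)
  let z : J → H ⧸ G → X := fun j ω => if h : D.e j ω ≠ 1 then f ⟨(j, ω), h⟩ else 1
  have hz : ∀ j ω, D.e j ω = 1 → z j ω = 1 := fun j ω h => by simp [z, h]
  -- total version of φ
  let φ' : J → H ⧸ G → H → X := fun j ω h =>
    if hh : ∃ (h1 : D.base j ω = ω) (h2 : h ∈ G), (⟨h, h2⟩ : G) ∈ D.A ⟨(j, ω), h1⟩ then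
      φ ⟨(j, ω), hh.choose⟩ ⟨⟨h, hh.choose_spec.choose⟩, hh.choose_spec.choose_spec⟩ else 1
  have hφ' : ∀ (i : D.I) (a : D.A i), φ' i.1.1 i.1.2 ((a : G) : H) = φ i a := by
    intro i a
    have hh : ∃ (h1 : D.base i.1.1 i.1.2 = i.1.2) (h2 : ((a : G) : H) ∈ G),
      (⟨a, h2⟩ : G) ∈ D.A ⟨(i.1.1, i.1.2), h1⟩ := ⟨i.2, a.1.2, a.2⟩
    simp only [φ']
    rw [dif_pos hh]
  have hφm : ∀ j ω h1 h2, D.base j ω = ω → h1 ∈ B j → h2 ∈ B j → h1 • ω = ω → h2 • ω = ω →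
      φ' j ω ((D.p ω)⁻¹ * (h1 * h2) * D.p ω) = φ' j ω ((D.p ω)⁻¹ * h1 * D.p ω) *
        φ' j ω ((D.p ω)⁻¹ * h2 * D.p ω) := by
    intro j ω h1 h2 hb m1 m2 s1 s2
    have hG : ∀ h : H, h • ω = ω → (D.p ω)⁻¹ * h * D.p ω ∈ G := by
      intro h hs
      rw [mem_iff, mul_smul, mul_smul, D.p_smul, hs, D.p_inv_smul]
    have hA : ∀ (h : H) (hs : h • ω = ω), h ∈ B j → (⟨_, hG h hs⟩ : G) ∈ D.A ⟨(j, ω), hb⟩ := by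
      intro h hs hm
      rw [D.mem_A]
      convert hm using 1
      simp only
      group
    have e1 := hφ' ⟨(j, ω), hb⟩ ⟨_, hA h1 s1 m1⟩
    have e2 := hφ' ⟨(j, ω), hb⟩ ⟨_, hA h2 s2 m2⟩
    have e3 := hφ' ⟨(j, ω), hb⟩ ⟨_, hA (h1 * h2) (by rw [mul_smul, s2, s1]) (mul_mem m1 m2)⟩
    simp only at e1 e2 e3
    rw [e1, e2, e3, ← map_mul]
    congr 1
    ext
    simp only [Subgroup.coe_mul]
    group
  let c : J → H → H ⧸ G → X := fun j b ω =>
    z j ω * φ' j (D.base j ω) ((D.p (D.base j ω))⁻¹ * ((D.t j ω)⁻¹ * b * D.t j (b⁻¹ • ω)) *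
      D.p (D.base j ω)) * (z j (b⁻¹ • ω))⁻¹
  have hc : ∀ j b1 b2 ω, b1 ∈ B j → b2 ∈ B j →
      c j (b1 * b2) ω = c j b1 ω * c j b2 (b1⁻¹ • ω) := by
    intro j b1 b2 ω m1 m2
    have q1 : D.base j (b1⁻¹ • ω) = D.base j ω := D.base_smul _ _ _ (inv_mem m1)
    have q2 : D.base j (b2⁻¹ • b1⁻¹ • ω) = D.base j ω := by
      rw [D.base_smul _ _ _ (inv_mem m2), q1]
    simp only [c]
    rw [q1, mul_inv_rev, mul_smul]
    have := hφm j (D.base j ω) ((D.t j ω)⁻¹ * b1 * D.t j (b1⁻¹ • ω))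
      ((D.t j (b1⁻¹ • ω))⁻¹ * b2 * D.t j (b2⁻¹ • b1⁻¹ • ω)) (D.base_base _ _)
      (mul_mem (mul_mem (inv_mem (D.t_mem _ _)) m1) (D.t_mem _ _))
      (mul_mem (mul_mem (inv_mem (D.t_mem _ _)) m2) (D.t_mem _ _))
      (by
        rw [mul_smul, mul_smul, ← q1, D.t_smul, smul_inv_smul, inv_smul_eq_iff, q1, D.t_smul])
      (by
        rw [mul_smul, mul_smul]
        nth_rw 1 [← q2]
        rw [D.t_smul, smul_inv_smul, inv_smul_eq_iff, ← q1, D.t_smul])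
    have h3 : ((D.t j ω)⁻¹ * b1 * D.t j (b1⁻¹ • ω)) *
      ((D.t j (b1⁻¹ • ω))⁻¹ * b2 * D.t j (b2⁻¹ • b1⁻¹ • ω)) =
        (D.t j ω)⁻¹ * (b1 * b2) * D.t j (b2⁻¹ • b1⁻¹ • ω) := by group
    rw [h3] at this
    rw [this]
    group
  let W := (H ⧸ G → X) ⋊[mulAutArrow] H
  have hom : ∀ j, ∃ ψ : B j →* W, ∀ b : B j, ψ b = ⟨c j b, b⟩ := by
    intro j
    refine ⟨MonoidHom.mk' (fun b => (⟨c j b, b⟩ : W)) ?_, fun b => rfl⟩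
    intro b1 b2
    apply SemidirectProduct.ext
    · funext ω
      rw [SemidirectProduct.mul_left]
      exact hc j b1 b2 ω b1.2 b2.2
    · rfl
  choose ψ hψ using hom
  obtain ⟨Φ, hΦ, -⟩ := hB.1 W inferInstance ψ Empty.elim
  have hΦr : ∀ h, (Φ h).right = h := by
    have : (SemidirectProduct.rightHom.comp Φ) = MonoidHom.id H := by
      apply MonoidHom.eq_of_eqOn_dense hB.2
      rintro x (hx | ⟨⟨⟩, _⟩)
      obtain ⟨j, hx⟩ := Set.mem_iUnion.1 hx
      have := hΦ j ⟨x, hx⟩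
      simp only at this
      simp [this, hψ]
    intro h
    exact DFunLike.congr_fun this h
  have hmul : ∀ h1 h2 ω, (Φ (h1 * h2)).left ω = (Φ h1).left ω * (Φ h2).left (h1⁻¹ • ω) := by
    intro h1 h2 ω
    rw [map_mul, SemidirectProduct.mul_left, hΦr]
    rfl
  have hone : ∀ ω, (Φ 1).left ω = 1 := by intro ω; rw [map_one]; rfl
  have hB' : ∀ j b ω, b ∈ B j → (Φ b).left ω = c j b ω := by
    intro j b ω hb
    have := hΦ j ⟨b, hb⟩
    simp only at this
    rw [this, hψ]
  have hφ1 : ∀ j ω, D.base j ω = ω → φ' j ω 1 = 1 := by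
    intro j ω hb
    have := hφ' ⟨(j, ω), hb⟩ 1
    simpa using this
  have hz1 : ∀ j ω, D.base j ω = ω → z j ω = 1 := by
    intro j ω hb
    apply hz
    rw [D.e_eq_one, D.t_one _ _ hb, hb, one_mul]
  have hct : ∀ j ω, (Φ (D.t j ω)).left ω = z j ω := by
    intro j ω
    rw [hB' _ _ _ (D.t_mem j ω)]
    have : (D.t j ω)⁻¹ • ω = D.base j ω := by rw [inv_smul_eq_iff, D.t_smul]
    simp only [c, this, D.t_base]
    rw [hz1 _ _ (D.base_base _ _)]
    simp [hφ1 _ _ (D.base_base _ _)]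
  have hcp : ∀ ω, (Φ (D.p ω)).left ω = 1 := by
    apply D.ind
    · rw [D.p_one, hone]
    · intro j ω h1 h2
      rw [← h1, hmul, hct]
      have : (D.t j ω)⁻¹ • ω = D.base j ω := by rw [inv_smul_eq_iff, D.t_smul]
      rw [this, h2, hz _ _ ((D.e_eq_one _ _).2 h1), one_mul]
  have hcp' : ∀ ω, (Φ (D.p ω)⁻¹).left o = 1 := by
    intro ω
    have := hmul (D.p ω)⁻¹ (D.p ω) o
    rw [inv_mul_cancel, hone, inv_inv, D.p_smul, hcp, mul_one] at this
    exact this.symm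
  refine ⟨MonoidHom.mk' (fun g : G => (Φ g).left o) ?_, ?_, ?_⟩
  · intro g1 g2
    rw [Subgroup.coe_mul, hmul]
    rw [(mem_iff (G := G) _).1 (inv_mem g1.2)]
  · intro i a
    show (Φ ((a : G) : H)).left o = _
    have ha := (D.mem_A i a).1 a.2
    have hs : (D.p i.1.2 * ((a : G) : H) * (D.p i.1.2)⁻¹)⁻¹ • i.1.2 = i.1.2 := by
      have : (((a : G) : H)⁻¹ • o) = o := (mem_iff (G := G) _).1 (inv_mem a.1.2)
      simp only [mul_inv_rev, inv_inv, mul_smul]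
      rw [D.p_inv_smul, this, D.p_smul]
    have h1 : ((a : G) : H) = (D.p i.1.2)⁻¹ * (D.p i.1.2 * ((a : G) : H) * (D.p i.1.2)⁻¹) *
      D.p i.1.2 := by group
    rw [h1, mul_assoc, hmul, hcp', one_mul, inv_inv, D.p_smul, hmul, hs, hcp, mul_one,
      hB' _ _ _ ha]
    simp only [c]
    rw [hs, hz1 _ _ i.2, i.2, D.t_one _ _ i.2, ← hφ']
    simp only [one_mul, inv_one, mul_one]
    rw [← h1]
  · intro i
    show (Φ (D.e i.1.1 i.1.2)).left o = _
    have : (D.t i.1.1 i.1.2)⁻¹ • i.1.2 = D.base i.1.1 i.1.2 := by rw [inv_smul_eq_iff, D.t_smul]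
    rw [e, mul_assoc, hmul, hcp', inv_inv, D.p_smul, hmul, hct, this, hcp, one_mul, mul_one]
    simp only [z]
    rw [dif_pos i.2]

end KData

end


section

theorem KData.exists_of_gen {H : Type} [Group H] {J : Type} (B : J → Subgroup H) (G : Subgroup H)
    (hB : Subgroup.closure (⋃ i, (B i : Set H)) = ⊤) : Nonempty (KData B G) := by
  classical
  let o : H ⧸ G := ((1 : H) : H ⧸ G)
  have hex : ∀ ω : H ⧸ G, ∃ n : ℕ, ∃ l : List H, (∀ x ∈ l, ∃ j, x ∈ B j) ∧ l.length = n ∧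
      l.prod • o = ω := by
    intro ω
    obtain ⟨h, rfl⟩ := QuotientGroup.mk_surjective ω
    have hh : h ∈ Subgroup.closure (⋃ i, (B i : Set H)) := by rw [hB]; trivial
    rw [← Subgroup.mem_toSubmonoid, Subgroup.closure_toSubmonoid] at hh
    obtain ⟨l, hl, hp⟩ := Submonoid.exists_list_of_mem_closure hh
    refine ⟨l.length, l, ?_, rfl, ?_⟩
    · intro x hx
      rcases hl x hx with h | h
      · exact Set.mem_iUnion.1 h
      · obtain ⟨j, hj⟩ := Set.mem_iUnion.1 h
        exact ⟨j, by simpa using inv_mem hj⟩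
    · rw [hp, MulAction.Quotient.smul_coe, smul_eq_mul, mul_one]
  let d : H ⧸ G → ℕ := fun ω => Nat.find (hex ω)
  have hd : ∀ ω, ω ≠ o → ∃ j, ∃ b ∈ B j, d (b • ω) < d ω := by
    intro ω hω
    obtain ⟨l, hl, hn, hp⟩ := Nat.find_spec (hex ω)
    cases l with
    | nil => simp at hp; exact absurd hp.symm hω
    | cons b l =>
      obtain ⟨j, hj⟩ := hl b (by simp)
      refine ⟨j, b⁻¹, inv_mem hj, ?_⟩
      have : d (b⁻¹ • ω) ≤ l.length := by
        apply Nat.find_min'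
        refine ⟨l, fun x hx => hl x (by simp [hx]), rfl, ?_⟩
        rw [eq_inv_smul_iff, ← mul_smul, ← List.prod_cons, hp]
      have h2 : d ω = l.length + 1 := by
        show Nat.find (hex ω) = _
        rw [← hn]; simp
      omega
  let O : J → H ⧸ G → Set (H ⧸ G) := fun j ω => {ω' | ∃ b ∈ B j, b • ω = ω'}
  have hO : ∀ j b ω, b ∈ B j → O j (b • ω) = O j ω := by
    intro j b ω hb
    ext ω'
    constructor
    · rintro ⟨b', hb', rfl⟩
      exact ⟨b' * b, mul_mem hb' hb, mul_smul _ _ _⟩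
    · rintro ⟨b', hb', rfl⟩
      exact ⟨b' * b⁻¹, mul_mem hb' (inv_mem hb), by rw [mul_smul, inv_smul_smul]⟩
  have hOn : ∀ j ω, ω ∈ O j ω := fun j ω => ⟨1, one_mem _, one_smul _ _⟩
  let F : Set (H ⧸ G) → H ⧸ G := fun S =>
    if h : S.Nonempty then Function.argminOn d S h else o
  let base : J → H ⧸ G → H ⧸ G := fun j ω => F (O j ω)
  have hbmem : ∀ j ω, base j ω ∈ O j ω := by
    intro j ω
    have h : (O j ω).Nonempty := ⟨ω, hOn j ω⟩
    simp only [base, F, dif_pos h]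
    exact Function.argminOn_mem _ _ _
  have hbmin : ∀ j ω b, b ∈ B j → d (base j ω) ≤ d (b • ω) := by
    intro j ω b hb
    have h : (O j ω).Nonempty := ⟨ω, hOn j ω⟩
    simp only [base, F, dif_pos h]
    exact Function.argminOn_le d (O j ω) ⟨b, hb, rfl⟩
  choose bb hbb hbs using hbmem
  let t : J → H ⧸ G → H := fun j ω => if base j ω = ω then 1 else (bb j ω)⁻¹
  have hts : ∀ j ω, t j ω • base j ω = ω := by
    intro j ω
    simp only [t]
    split_ifs with h
    · rw [one_smul, h]
    · rw [inv_smul_eq_iff, hbs]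
  have hlab : ∀ ω, ω ≠ o → ∃ j, d (base j ω) < d ω := by
    intro ω hω
    obtain ⟨j, b, hb, h⟩ := hd ω hω
    exact ⟨j, (hbmin j ω b hb).trans_lt h⟩
  choose lab hlab using hlab
  let p : H ⧸ G → H := (measure d).wf.fix (fun ω rec =>
    if h : ω = o then 1 else t (lab ω h) ω * rec (base (lab ω h) ω) (hlab ω h))
  have hp : ∀ ω, p ω = if h : ω = o then 1 else t (lab ω h) ω * p (base (lab ω h) ω) := by
    intro ω
    exact (measure d).wf.fix_eq _ ω
  have ind : ∀ P : H ⧸ G → Prop, P o →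
    (∀ j ω, t j ω * p (base j ω) = p ω → P (base j ω) → P ω) → ∀ ω, P ω := by
    intro P h0 hs ω
    induction ω using (measure d).wf.induction with
    | _ ω ih =>
      by_cases h : ω = o
      · rw [h]; exact h0
      · refine hs (lab ω h) ω ?_ (ih _ (hlab ω h))
        rw [hp ω, dif_neg h]
  have hp1 : p o = 1 := by rw [hp, dif_pos rfl]
  exact ⟨{
    base := base
    t := t
    p := p
    base_smul := fun j b ω hb => by simp only [base, hO j b ω hb]
    t_mem := fun j ω => by
      simp only [t]
      split_ifs
      · exact one_mem _
      · exact inv_mem (hbb j ω)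
    t_smul := hts
    t_one := fun j ω h => by simp only [t, if_pos h]
    p_smul := by
      apply ind
      · show p o • o = o
        rw [hp1, one_smul]
      · intro j ω h1 h2
        rw [← h1, mul_smul, h2, hts]
    p_one := hp1
    ind := ind }⟩

theorem kurosh {H : Type} [Group H] {J : Type} (B : J → Subgroup H)
    (hB : Split B (Empty.elim : Empty → H)) (G : Subgroup H) :
    ∃ (I Y : Type) (A : I → Subgroup G) (y : Y → G), Split A y ∧
      ∀ i, ∃ (h : H) (j : J), ∀ a ∈ A i, h * (a : H) * h⁻¹ ∈ B j := by
  have hg : Subgroup.closure (⋃ i, (B i : Set H)) = ⊤ := by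
    rw [← hB.2]; congr 1; ext x; simp
  obtain ⟨D⟩ := KData.exists_of_gen B G hg
  exact ⟨D.I, D.Y, D.A, D.y, ⟨fun X _ φ f => D.univ hB X φ f, D.gen hg⟩,
    fun i => ⟨D.p i.1.2, i.1.1, fun a ha => (D.mem_A i a).1 ha⟩⟩

end


section

theorem split_coprod {J R : Type} (B : J → Type) [∀ j, Group (B j)] :
    Split (G := Monoid.Coprod (Monoid.CoprodI B) (FreeGroup R))
      (fun j => ((Monoid.Coprod.inl).comp (Monoid.CoprodI.of (i := j))).range)
      (fun r => Monoid.Coprod.inr (FreeGroup.of r)) := by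
  constructor
  · intro X _ φ f
    refine ⟨Monoid.Coprod.lift (Monoid.CoprodI.lift fun j => (φ j).comp
      (MonoidHom.rangeRestrict (MonoidHom.comp
        (Monoid.Coprod.inl : Monoid.CoprodI B →* Monoid.Coprod (Monoid.CoprodI B) (FreeGroup R))
        (Monoid.CoprodI.of (i := j)))))
      (FreeGroup.lift f), ?_, ?_⟩
    · rintro j ⟨a, b, rfl⟩
      simp only [MonoidHom.comp_apply, Monoid.Coprod.lift_apply_inl, Monoid.CoprodI.lift_of]
      rfl
    · intro t
      simp
  · rw [eq_top_iff]
    intro g _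
    induction g using Monoid.Coprod.induction_on with
    | inl m =>
      induction m using Monoid.CoprodI.induction_on with
      | one => rw [map_one]; exact one_mem _
      | of j m =>
        exact Subgroup.subset_closure (Or.inl (Set.mem_iUnion.2 ⟨j, m, rfl⟩))
      | mul a b ha hb => rw [map_mul]; exact mul_mem (ha trivial) (hb trivial)
    | inr n =>
      induction n using FreeGroup.induction_on with
      | C1 => rw [map_one]; exact one_mem _
      | of j => exact Subgroup.subset_closure (Or.inr ⟨j, rfl⟩)
      | inv_of j h => rw [map_inv]; exact inv_mem (h trivial)
      | mul a b ha hb => rw [map_mul]; exact mul_mem (ha trivial) (hb trivial)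
    | mul a b ha hb => exact mul_mem (ha trivial) (hb trivial)

theorem Split.map {G G' : Type} [Group G] [Group G'] {I Y : Type} {A : I → Subgroup G}
    {y : Y → G} (h : Split A y) (e : G ≃* G') :
    Split (fun i => (A i).map e.toMonoidHom) (fun t => e (y t)) := by
  constructor
  · intro X _ φ f
    obtain ⟨Φ, h1, h2⟩ := h.1 X _ (fun i => (φ i).comp (e.toMonoidHom.subgroupMap (A i))) f
    refine ⟨Φ.comp e.symm.toMonoidHom, ?_, ?_⟩
    · rintro i ⟨_, a, ha, rfl⟩
      have := h1 i ⟨a, ha⟩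
      simp at this
      simp [this]
      rfl
    · intro t
      simp [h2]
  · have := congrArg (Subgroup.map e.toMonoidHom) h.2
    rw [MonoidHom.map_closure, Subgroup.map_top_of_surjective _ e.surjective] at this
    rw [← this]
    congr 1
    rw [Set.image_union, Set.image_iUnion, ← Set.range_comp]
    rfl

theorem exists_hom_zpowers {G X : Type} [Group G] [Group X] (g : G) (hg : ¬ IsOfFinOrder g)
    (x : X) : ∃ ψ : Subgroup.zpowers g →* X, ψ ⟨g, Subgroup.mem_zpowers g⟩ = x := by
  have hinj : Function.Injective (zpowersHom G g) := by
    have := injective_zpow_iff_not_isOfFinOrder.2 hg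
    intro a b hab
    exact this hab
  have hr : ∀ a : Subgroup.zpowers g, ∃ n : ℤ, g ^ n = a := fun a => a.2
  choose n hn using hr
  have hi := injective_zpow_iff_not_isOfFinOrder.2 hg
  refine ⟨MonoidHom.mk' (fun a => x ^ n a) ?_, ?_⟩
  · intro a b
    rw [← zpow_add]
    congr 1
    apply hi
    simp only [hn, zpow_add, Subgroup.coe_mul]
  · show x ^ n _ = x
    have : n ⟨g, Subgroup.mem_zpowers g⟩ = 1 := by
      apply hi
      simp only [hn, zpow_one]
    rw [this, zpow_one]

theorem exists_hom_zpowers' {G X : Type} [Group G] [Group X] (M : Subgroup G) (g : G)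
    (hM : M = Subgroup.zpowers g) (hg : ¬ IsOfFinOrder g)
    (x : X) : ∃ ψ : M →* X, ∀ hm, ψ ⟨g, hm⟩ = x := by
  subst hM
  obtain ⟨ψ, hψ⟩ := exists_hom_zpowers g hg x
  exact ⟨ψ, fun _ => hψ⟩

theorem Split.not_finOrder {G : Type} [Group G] {I Y : Type} {A : I → Subgroup G}
    {y : Y → G} (h : Split A y) (t : Y) : ¬ IsOfFinOrder (y t) := by
  obtain ⟨Φ, h1, h2⟩ := h.1 (Multiplicative ℤ) _ (fun _ => 1) (fun _ => Multiplicative.ofAdd 1)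
  intro hf
  have := Φ.isOfFinOrder hf
  rw [h2, isOfFinOrder_iff_pow_eq_one] at this
  obtain ⟨n, hn, h⟩ := this
  have h' := congrArg Multiplicative.toAdd h
  simp at h'
  omega

theorem Split.toEmpty {G : Type} [Group G] {I Y : Type} {A : I → Subgroup G}
    {y : Y → G} (h : Split A y) :
    Split (Sum.elim A (fun t => Subgroup.zpowers (y t))) (Empty.elim : Empty → G) := by
  constructor
  · intro X _ φ f
    obtain ⟨Φ, h1, h2⟩ := h.1 X _ (fun i => φ (Sum.inl i))
      (fun t => φ (Sum.inr t) ⟨y t, Subgroup.mem_zpowers _⟩)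
    refine ⟨Φ, ?_, fun t => t.elim⟩
    rintro (i | t) a
    · exact h1 i a
    · obtain ⟨a, n, rfl⟩ := a
      simp only [map_zpow, h2]
      rw [← map_zpow]
      rfl
  · rw [eq_top_iff, ← h.2, Subgroup.closure_le]
    rintro g (hg | ⟨t, rfl⟩)
    · obtain ⟨i, hi⟩ := Set.mem_iUnion.1 hg
      exact Subgroup.subset_closure (Or.inl (Set.mem_iUnion.2 ⟨Sum.inl i, hi⟩))
    · exact Subgroup.subset_closure (Or.inl (Set.mem_iUnion.2
        ⟨Sum.inr t, Subgroup.mem_zpowers (y t)⟩))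

open Classical in
theorem Split.clean {G : Type} [Group G] {I Y : Type} {A : I → Subgroup G}
    {y : Y → G} (h : Split A y) (P : I → Prop) (g : I → G)
    (hP : ∀ i, ¬ P i → A i ≠ ⊥ → A i = Subgroup.zpowers (g i) ∧ ¬ IsOfFinOrder (g i)) :
    Split (fun i : {i // P i ∧ A i ≠ ⊥} => A i)
      (Sum.elim y (fun i : {i // ¬ P i ∧ A i ≠ ⊥} => g i)) := by
  constructor
  · intro X _ φ f
    have key : ∀ i, ∃ ψ : A i →* X, (∀ hi : P i ∧ A i ≠ ⊥, ψ = φ ⟨i, hi⟩) ∧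
        ∀ hi : ¬ P i ∧ A i ≠ ⊥, ∀ hm : g i ∈ A i, ψ ⟨g i, hm⟩ = f (Sum.inr ⟨i, hi⟩) := by
      intro i
      by_cases h0 : A i = ⊥
      · exact ⟨1, fun hi => absurd h0 hi.2, fun hi => absurd h0 hi.2⟩
      by_cases hp : P i
      · exact ⟨φ ⟨i, hp, h0⟩, fun _ => rfl, fun hi => absurd hp hi.1⟩
      · obtain ⟨h1, h2⟩ := hP i hp h0
        obtain ⟨ψ, hψ⟩ := exists_hom_zpowers' (A i) (g i) h1 h2 (f (Sum.inr ⟨i, hp, h0⟩))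
        exact ⟨ψ, fun hi => absurd hi.1 hp, fun _ => hψ⟩
    choose ψ hψ1 hψ2 using key
    obtain ⟨Φ, h1, h2⟩ := h.1 X _ ψ (fun t => f (Sum.inl t))
    refine ⟨Φ, ?_, ?_⟩
    · rintro ⟨i, hi⟩ a
      rw [h1, hψ1 i hi]
    · rintro (t | ⟨i, hi⟩)
      · exact h2 t
      · have hm : g i ∈ A i := by rw [(hP i hi.1 hi.2).1]; exact Subgroup.mem_zpowers _
        rw [← hψ2 i hi hm, ← h1]
        rfl
  · rw [eq_top_iff, ← h.2, Subgroup.closure_le]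
    rintro x (hx | ⟨t, rfl⟩)
    · obtain ⟨i, hi⟩ := Set.mem_iUnion.1 hx
      have hi : x ∈ A i := hi
      by_cases h0 : A i = ⊥
      · rw [h0, Subgroup.mem_bot] at hi
        rw [hi]; exact one_mem _
      by_cases hp : P i
      · exact Subgroup.subset_closure (Or.inl (Set.mem_iUnion.2 ⟨⟨i, hp, h0⟩, hi⟩))
      · have : Subgroup.zpowers (g i) ≤ Subgroup.closure
          ((⋃ i : {i // P i ∧ A i ≠ ⊥}, (A i : Set G)) ∪
            Set.range (Sum.elim y (fun i : {i // ¬ P i ∧ A i ≠ ⊥} => g i))) := by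
          rw [Subgroup.zpowers_le]
          exact Subgroup.subset_closure (Or.inr ⟨Sum.inr ⟨i, hp, h0⟩, rfl⟩)
        apply this
        rwa [← (hP i hp h0).1]
    · exact Subgroup.subset_closure (Or.inr ⟨Sum.inl t, rfl⟩)

open Classical in
theorem Split.finite_of_empty {G : Type} [Group G] [hfg : Group.FG G] {I : Type}
    {A : I → Subgroup G}
    (h : Split A (Empty.elim : Empty → G)) (hA : ∀ i, A i ≠ ⊥) : Finite I := by
  have key : ∀ i, ∃ Φ : G →* A i, (∀ a : A i, Φ a = a) ∧ ∀ j, j ≠ i → ∀ a ∈ A j, Φ a = 1 := by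
    intro i
    obtain ⟨Φ, h1, -⟩ := h.1 (A i) _ (fun j => if hj : j = i then hj ▸ MonoidHom.id (A j) else 1)
      Empty.elim
    refine ⟨Φ, ?_, ?_⟩
    · intro a
      rw [h1]; simp
    · intro j hj a ha
      have := h1 j ⟨a, ha⟩
      simp only [dif_neg hj] at this
      exact this
  choose Φ hΦ1 hΦ2 using key
  have hfin : ∀ g : G, {i | Φ i g ≠ 1}.Finite := by
    intro g
    have hg : g ∈ Subgroup.closure ((⋃ i, (A i : Set G)) ∪ Set.range (Empty.elim : Empty → G)) := by
      rw [h.2]; trivial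
    induction hg using Subgroup.closure_induction with
    | mem g hg =>
      rcases hg with hg | ⟨⟨⟩, _⟩
      obtain ⟨j, hj⟩ := Set.mem_iUnion.1 hg
      refine (Set.finite_singleton j).subset ?_
      intro i hi
      by_contra hne
      exact hi (hΦ2 i j (fun h => hne h.symm) g hj)
    | one => simp
    | mul a b _ _ ha hb =>
      refine (ha.union hb).subset ?_
      intro i hi
      by_contra hne
      simp only [Set.mem_union, Set.mem_ofPred_eq, not_or, not_not] at hne
      apply hi
      rw [map_mul, hne.1, hne.2, one_mul]
    | inv a _ ha => simpa using ha
  obtain ⟨S, hS⟩ := hfg.out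
  have hU : (⋃ s ∈ S, {i | Φ i s ≠ 1}).Finite := S.finite_toSet.biUnion (fun s _ => hfin s)
  have : (⋃ s ∈ S, {i | Φ i s ≠ 1}) = Set.univ := by
    rw [Set.eq_univ_iff_forall]
    intro i
    by_contra hne
    simp only [Set.mem_iUnion, Set.mem_ofPred_eq, not_exists, not_not] at hne
    have h1 : Φ i = 1 := by
      apply MonoidHom.eq_of_eqOn_dense hS
      intro s hs
      exact hne s hs
    apply hA i
    rw [Subgroup.eq_bot_iff_forall]
    intro a ha
    have := hΦ1 i ⟨a, ha⟩
    rw [h1] at this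
    simpa using (congrArg Subtype.val this).symm
  rw [this] at hU
  exact Set.finite_univ_iff.1 hU

theorem Split.finite {G : Type} [Group G] [hfg : Group.FG G] {I Y : Type}
    {A : I → Subgroup G} {y : Y → G}
    (h : Split A y) (hA : ∀ i, A i ≠ ⊥) : Finite I ∧ Finite Y := by
  have hf : Finite (I ⊕ Y) := by
    apply h.toEmpty.finite_of_empty
    rintro (i | t)
    · exact hA i
    · simp only [Sum.elim_inr, ne_eq, Subgroup.zpowers_eq_bot]
      intro h1
      apply h.not_finOrder t
      rw [h1]; exact IsOfFinOrder.one
  exact ⟨Finite.sum_left Y, Finite.sum_right I⟩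

theorem cyc {G H : Type} [Group G] [Group H] (ι : G →* H) (hι : Function.Injective ι)
    (M : Subgroup G) (h g : H) (hg : ¬ IsOfFinOrder g) (hM : M ≠ ⊥)
    (hc : ∀ a ∈ M, h * ι a * h⁻¹ ∈ Subgroup.zpowers g) :
    ∃ m, M = Subgroup.zpowers m ∧ ¬ IsOfFinOrder m := by
  let f : M →* H := ((MulAut.conj h).toMonoidHom.comp ι).comp M.subtype
  have hf : Function.Injective f :=
    ((MulAut.conj h).injective.comp hι).comp M.subtype_injective
  have hcy : IsCyclic M := by
    apply isCyclic_of_injective (f.codRestrict (Subgroup.zpowers g) (fun a => hc a a.2))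
    intro a b hab
    exact hf (congrArg Subtype.val hab)
  obtain ⟨m, hm⟩ := hcy.exists_zpow_surjective
  have hM' : M = Subgroup.zpowers (m : G) := by
    ext a
    constructor
    · intro ha
      obtain ⟨n, hn⟩ := hm ⟨a, ha⟩
      exact ⟨n, by simpa using congrArg Subtype.val hn⟩
    · rintro ⟨n, rfl⟩
      exact M.zpow_mem m.2 n
  refine ⟨m, hM', ?_⟩
  intro hfo
  have h1 : IsOfFinOrder (f m) := by
    apply f.isOfFinOrder
    rw [isOfFinOrder_iff_pow_eq_one] at hfo ⊢
    obtain ⟨n, hn, h⟩ := hfo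
    exact ⟨n, hn, by ext; simpa using h⟩
  obtain ⟨n, hn⟩ := hc m m.2
  have hn' : g ^ n = f m := hn
  have h0 : n = 0 := by
    by_contra hn0
    rw [← hn', isOfFinOrder_iff_zpow_eq_one] at h1
    obtain ⟨k, hk, h1⟩ := h1
    rw [← zpow_mul] at h1
    exact hg (isOfFinOrder_iff_zpow_eq_one.2 ⟨_, mul_ne_zero hn0 hk, h1⟩)
  have h2 : f m = 1 := by rw [← hn', h0, zpow_zero]
  have h3 : m = 1 := hf (by rw [h2, map_one])
  apply hM
  rw [hM', h3]
  simp

end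


section

theorem kurosh_map {H : Type} [Group H] {J R : Type} {B : J → Subgroup H} {x : R → H}
    (hB : Split B x) {G : Type} [Group G] (ι : G →* H)
    (hι : Function.Injective ι) :
    ∃ (I Y : Type) (A : I → Subgroup G) (y : Y → G),
      Split A y ∧ ∀ i, ∃ (h : H) (j : J ⊕ R), ∀ a ∈ A i,
      h * ι a * h⁻¹ ∈ (Sum.elim B (fun t => Subgroup.zpowers (x t))) j := by
  obtain ⟨I, Y, A0, y0, hS0, hc0⟩ := kurosh _ hB.toEmpty ι.range
  let e : ι.range ≃* G := (MonoidHom.ofInjective hι).symm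
  have hS := hS0.map e
  have hιe : ∀ a : ι.range, ι (e a) = a := fun a => by
    simp only [e]
    rw [← MonoidHom.ofInjective_apply hι]; simp
  refine ⟨I, Y, _, _, hS, ?_⟩
  intro i
  obtain ⟨h, j, hh⟩ := hc0 i
  refine ⟨h, j, ?_⟩
  rintro _ ⟨a, ha, rfl⟩
  have := hh a ha
  rw [← hιe] at this
  exact this

theorem kurosh_fg {H : Type} [Group H] {J R : Type} {B : J → Subgroup H} {x : R → H}
    (hB : Split B x) {G : Type} [Group G] [Group.FG G] (ι : G →* H)
    (hι : Function.Injective ι) :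
    ∃ (I Y : Type) (_ : Finite I) (_ : Finite Y) (A : I → Subgroup G) (y : Y → G),
      Split A y ∧ (∀ i, A i ≠ ⊥) ∧ ∀ i, ∃ (h : H) (j : J), ∀ a ∈ A i, h * ι a * h⁻¹ ∈ B j := by
  obtain ⟨I, Y, A, y, hS, hc⟩ := kurosh_map hB ι hι
  let P : I → Prop := fun i => ∃ (h : H) (j : J), ∀ a ∈ A i, h * ι a * h⁻¹ ∈ B j
  have hg : ∀ i, ∃ g : G, ¬ P i → A i ≠ ⊥ → A i = Subgroup.zpowers g ∧ ¬ IsOfFinOrder g := by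
    intro i
    by_cases hP : P i
    · exact ⟨1, fun h => absurd hP h⟩
    by_cases h0 : A i = ⊥
    · exact ⟨1, fun _ h => absurd h0 h⟩
    obtain ⟨h, (j | r), hh⟩ := hc i
    · exact absurd ⟨h, j, hh⟩ hP
    · obtain ⟨g, hg⟩ := cyc ι hι (A i) h (x r) (hB.not_finOrder r) h0 hh
      exact ⟨g, fun _ _ => hg⟩
  choose g hg using hg
  have hS' := hS.clean P g hg
  obtain ⟨f1, f2⟩ := hS'.finite (fun i => i.2.2)
  exact ⟨_, _, f1, f2, _, _, hS', fun i => i.2.2, fun i => i.2.1⟩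

open Classical in
theorem Split.coprod_equiv {G : Type} [Group G] {I : Type} {A : I → Subgroup G}
    (h : Split A (Empty.elim : Empty → G)) (i : I) :
    Nonempty (G ≃* Monoid.Coprod (A i)
      (Subgroup.closure (⋃ j ∈ {j | j ≠ i}, (A j : Set G)))) := by
  set K := Subgroup.closure (⋃ j ∈ {j | j ≠ i}, (A j : Set G)) with hK
  have hle : ∀ j, j ≠ i → A j ≤ K := by
    intro j hj a ha
    exact Subgroup.subset_closure (Set.mem_biUnion hj ha)
  let f : ∀ j, A j →* Monoid.Coprod (A i) K := fun j =>
    if hj : j = i then Monoid.Coprod.inl.comp (Subgroup.inclusion (le_of_eq (by rw [hj])))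
    else Monoid.Coprod.inr.comp (Subgroup.inclusion (hle j hj))
  obtain ⟨Φ, hΦ, -⟩ := h.1 (Monoid.Coprod (A i) K) _ f Empty.elim
  have h1 : ∀ a : A i, Φ a = Monoid.Coprod.inl a := by
    intro a
    rw [hΦ]; simp [f]; rfl
  have h2' : ∀ j (hj : j ≠ i) (a : G) (ha : a ∈ A j), Φ a = Monoid.Coprod.inr ⟨a, hle j hj ha⟩ := by
    intro j hj a ha
    have := hΦ j ⟨a, ha⟩
    simp only [f, dif_neg hj] at this
    exact this
  have h2 : ∀ a : K, Φ a = Monoid.Coprod.inr a := by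
    rintro ⟨a, ha⟩
    have : ∀ ha : a ∈ K, Φ a = Monoid.Coprod.inr (⟨a, ha⟩ : K) := by
      rw [hK] at ha
      induction ha using Subgroup.closure_induction with
      | mem a ha =>
        simp only [Set.mem_iUnion] at ha
        obtain ⟨j, hj, ha⟩ := ha
        exact fun _ => h2' j hj a ha
      | one => intro _; rw [map_one]; exact (map_one _).symm
      | mul a b ha' hb' ha hb =>
        intro _
        rw [map_mul, ha ha', hb hb', ← map_mul]; rfl
      | inv a ha' ha =>
        intro _
        rw [map_inv, ha ha', ← map_inv]; rfl
    exact this ha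
  let Ψ : Monoid.Coprod (A i) K →* G := Monoid.Coprod.lift (A i).subtype K.subtype
  refine ⟨MonoidHom.toMulEquiv Φ Ψ ?_ ?_⟩
  · apply MonoidHom.eq_of_eqOn_dense h.2
    rintro a (ha | ⟨⟨⟩, _⟩)
    obtain ⟨j, ha⟩ := Set.mem_iUnion.1 ha
    by_cases hj : j = i
    · subst hj
      have := h1 ⟨a, ha⟩
      simp only at this
      simp [this, Ψ]
    · simp [h2' j hj a ha, Ψ]
  · apply Monoid.Coprod.hom_ext
    · ext a; simp [Ψ, h1]
    · ext a; simp [Ψ, h2]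

theorem indec_conj {H : Type} [Group H] {J R : Type} {B : J → Subgroup H} {x : R → H}
    (hB : Split B x) (M : Subgroup H) (hn : Nontrivial M) (hfi : FreelyIndecomposable M)
    (hz : IsEmpty (M ≃* Multiplicative ℤ)) :
    ∃ (h : H) (j : J), ∀ a ∈ M, h * a * h⁻¹ ∈ B j := by
  obtain ⟨I, Y, A, y, hS, hc⟩ := kurosh_map hB M.subtype M.subtype_injective
  have hnz : ∀ m : M, ¬ IsOfFinOrder m → Subgroup.zpowers m ≠ ⊤ := by
    intro m hm htop
    have hinj : Function.Injective (zpowersHom M m) := by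
      have := injective_zpow_iff_not_isOfFinOrder.2 hm
      intro a b hab
      exact this hab
    have hsurj : Function.Surjective (zpowersHom M m) := by
      intro a
      have : a ∈ Subgroup.zpowers m := by rw [htop]; trivial
      obtain ⟨n, hn⟩ := this
      exact ⟨Multiplicative.ofAdd n, hn⟩
    exact hz.elim (MulEquiv.ofBijective _ ⟨hinj, hsurj⟩).symm
  have hE := hS.toEmpty
  obtain ⟨i, hi⟩ : ∃ i, (Sum.elim A (fun t => Subgroup.zpowers (y t))) i ≠ ⊥ := by
    by_contra hne
    push Not at hne
    have h2 := hE.2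
    have : (⊤ : Subgroup M) ≤ ⊥ := by
      rw [← hE.2, Subgroup.closure_le]
      rintro a (ha | ⟨⟨⟩, _⟩)
      obtain ⟨j, ha⟩ := Set.mem_iUnion.1 ha
      rw [hne j] at ha
      exact ha
    obtain ⟨m, hm⟩ := exists_ne (1 : M)
    exact hm (this trivial)
  have htop : (Sum.elim A (fun t => Subgroup.zpowers (y t))) i = ⊤ := by
    rcases hfi _ _ _ _ (hE.coprod_equiv i) with h | h
    · exact absurd ((Subgroup.eq_bot_iff_forall _).2 fun a ha =>
        congrArg Subtype.val (Subsingleton.elim (⟨a, ha⟩ : (Sum.elim A _ i : Subgroup M)) 1)) hi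
    · rw [eq_top_iff, ← hE.2, Subgroup.closure_le]
      rintro a (ha | ⟨⟨⟩, _⟩)
      obtain ⟨j, ha⟩ := Set.mem_iUnion.1 ha
      by_cases hj : j = i
      · rw [hj] at ha; exact ha
      · have hm : a ∈ Subgroup.closure (⋃ j ∈ {j | j ≠ i},
          ((Sum.elim A (fun t => Subgroup.zpowers (y t)) j : Subgroup M) : Set M)) :=
          Subgroup.subset_closure (Set.mem_biUnion hj ha)
        have := congrArg Subtype.val (Subsingleton.elim (⟨a, hm⟩ : Subgroup.closure (⋃ j ∈ {j | j ≠ i},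
          ((Sum.elim A (fun t => Subgroup.zpowers (y t)) j : Subgroup M) : Set M))) 1)
        simp only at this
        rw [this]
        exact one_mem _
  rcases i with i | t
  · obtain ⟨h, (j | r), hh⟩ := hc i
    · refine ⟨h, j, fun a ha => hh ⟨a, ha⟩ ?_⟩
      have : A i = ⊤ := htop
      rw [this]; trivial
    · obtain ⟨g, hg1, hg2⟩ := cyc M.subtype M.subtype_injective (A i) h (x r)
        (hB.not_finOrder r) hi hh
      exact absurd (hg1.symm.trans htop) (hnz g hg2)
  · exact absurd htop (hnz _ (hS.not_finOrder t))

end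


section

open scoped ENNReal InnerProductSpace

abbrev Ell (α : Type) := lp (fun _ : α => ℝ) 2

theorem Ell.summable_sq {α : Type} (f : Ell α) : Summable (fun a => (f a) ^ 2) := by
  have := (lp.memℓp f).summable (by norm_num)
  simpa using this

theorem Ell.norm_sq {α : Type} (f : Ell α) : ‖f‖ ^ 2 = ∑' a, (f a) ^ 2 := by
  have := lp.norm_rpow_eq_tsum (p := 2) (by norm_num) f
  simpa using this

noncomputable def pull {α β : Type} (σ : α ↪ β) : Ell β →L[ℝ] Ell α :=
  LinearMap.mkContinuous
    { toFun := fun f => ⟨fun a => f (σ a), by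
        apply memℓp_gen
        have := (Ell.summable_sq f).comp_injective σ.injective
        simpa [Function.comp_def] using this⟩
      map_add' := fun f g => by ext a; rfl
      map_smul' := fun c f => by ext a; rfl } 1 (by
    intro f
    rw [one_mul]
    apply le_of_sq_le_sq _ (norm_nonneg _)
    rw [Ell.norm_sq, Ell.norm_sq]
    exact tsum_comp_le_tsum_of_inj (Ell.summable_sq f) (fun a => sq_nonneg _) σ.injective)

@[simp] theorem pull_apply {α β : Type} (σ : α ↪ β) (f : Ell β) (a : α) :
    pull σ f a = f (σ a) := rfl

open Classical in
noncomputable def dl {α : Type} (a : α) : Ell α := lp.single 2 a (1 : ℝ)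

open Classical in
theorem dl_apply {α : Type} (a b : α) : (dl a : Ell α) b = if b = a then 1 else 0 := by
  simp only [dl, lp.single_apply]
  split_ifs with h
  · subst h; simp
  · simp [h]

theorem inner_dl {α : Type} (a : α) (f : Ell α) : ⟪dl a, f⟫_ℝ = f a := by
  classical
  rw [dl, lp.inner_single_left]; simp

theorem inner_dl' {α : Type} (a : α) (f : Ell α) : ⟪f, dl a⟫_ℝ = f a := by
  rw [real_inner_comm, inner_dl]

theorem inner_eq {α : Type} (f g : Ell α) : ⟪f, g⟫_ℝ = ∑' a, f a * g a := by
  rw [lp.inner_eq_tsum]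
  congr 1; ext a; simp [mul_comm]

theorem summable_inner' {α : Type} (f g : Ell α) : Summable (fun a => f a * g a) := by
  have := lp.summable_inner (𝕜 := ℝ) f g
  refine this.congr ?_
  intro a; simp [mul_comm]

section trace
variable {H : Type} [Group H]

def rshift (m : Type) (g : H) : m × H ↪ m × H :=
  ⟨fun x => (x.1, x.2 * g), fun x y h => by
    simp only [Prod.mk.injEq, mul_left_inj] at h
    exact Prod.ext h.1 h.2⟩

@[simp] theorem rshift_apply (m : Type) (g : H) (x : m × H) :
    rshift m g x = (x.1, x.2 * g) := rfl

def Equi {m n : Type} (T : Ell (m × H) →L[ℝ] Ell (n × H)) : Prop :=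
  ∀ g f, T (pull (rshift m g) f) = pull (rshift n g) (T f)

theorem pull_dl {m : Type} (i : m) (g u : H) :
    pull (rshift m g) (dl (i, u)) = dl (i, u * g⁻¹) := by
  classical
  ext ⟨l, h⟩
  rw [pull_apply, dl_apply, dl_apply]
  congr 1
  simp [eq_mul_inv_iff_mul_eq]

theorem Equi.coef {m n : Type} {T : Ell (m × H) →L[ℝ] Ell (n × H)} (hT : Equi T) (i : m) (l : n)
    (h : H) : T (dl (i, 1)) (l, h) = T (dl (i, h⁻¹)) (l, 1) := by
  have := hT h (dl (i, 1))
  rw [pull_dl, one_mul] at this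
  rw [this, pull_apply]; simp

noncomputable def tr {m : Type} [Fintype m] (X : Ell (m × H) →L[ℝ] Ell (m × H)) : ℝ :=
  ∑ i, X (dl (i, 1)) (i, 1)

theorem tr_comm {m n : Type} [Fintype m] [Fintype n] (X : Ell (n × H) →L[ℝ] Ell (m × H))
    (Y : Ell (m × H) →L[ℝ] Ell (n × H)) (hX : Equi X) (hY : Equi Y) :
    tr (X.comp Y) = tr (Y.comp X) := by
  have key : ∀ {m n : Type} [Fintype n] (X : Ell (n × H) →L[ℝ] Ell (m × H))
    (Y : Ell (m × H) →L[ℝ] Ell (n × H)) (_ : Equi X) (_ : Equi Y) (i : m),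
    (X.comp Y) (dl (i, 1)) (i, 1) = ∑ l, ∑' h : H, X (dl (l, h)) (i, 1) * Y (dl (i, 1)) (l, h) := by
    intro m n _ X Y hX hY i
    rw [← inner_dl, ContinuousLinearMap.comp_apply, ← ContinuousLinearMap.adjoint_inner_left,
      inner_eq, (summable_inner' _ _).tsum_prod, tsum_fintype]
    refine Finset.sum_congr rfl fun l _ => tsum_congr fun h => ?_
    rw [← inner_dl (l, h) (X.adjoint _), ContinuousLinearMap.adjoint_inner_right, inner_dl']
  simp only [tr]
  simp_rw [key X Y hX hY, key Y X hY hX]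
  rw [Finset.sum_comm]
  refine Finset.sum_congr rfl fun l _ => Finset.sum_congr rfl fun i _ => ?_
  rw [← (Equiv.inv H).tsum_eq]
  refine tsum_congr fun h => ?_
  simp only [Equiv.inv_apply]
  rw [hY.coef, inv_inv, hX.coef, mul_comm]

theorem tr_one {m : Type} [Fintype m] :
    tr (1 : Ell (m × H) →L[ℝ] Ell (m × H)) = Fintype.card m := by
  classical
  simp [tr, dl_apply]

theorem tr_sub {m : Type} [Fintype m] (X Y : Ell (m × H) →L[ℝ] Ell (m × H)) :
    tr (X - Y) = tr X - tr Y := by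
  simp [tr]

theorem Equi.add {m n : Type} {T S : Ell (m × H) →L[ℝ] Ell (n × H)} (hT : Equi T) (hS : Equi S) :
    Equi (T + S) := by
  intro g f
  rw [_root_.add_apply, _root_.add_apply, hT, hS, map_add]

theorem Equi.sub {m n : Type} {T S : Ell (m × H) →L[ℝ] Ell (n × H)} (hT : Equi T) (hS : Equi S) :
    Equi (T - S) := by
  intro g f
  rw [_root_.sub_apply, _root_.sub_apply, hT, hS, map_sub]

theorem Equi.smul {m n : Type} {T : Ell (m × H) →L[ℝ] Ell (n × H)} (hT : Equi T) (c : ℝ) :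
    Equi (c • T) := by
  intro g f
  rw [_root_.smul_apply, _root_.smul_apply, hT, map_smul]

theorem Equi.comp {m n k : Type} {T : Ell (n × H) →L[ℝ] Ell (k × H)}
    {S : Ell (m × H) →L[ℝ] Ell (n × H)} (hT : Equi T) (hS : Equi S) :
    Equi (T.comp S) := by
  intro g f
  simp only [ContinuousLinearMap.comp_apply]
  rw [hS, hT]

theorem Equi.one {m : Type} : Equi (1 : Ell (m × H) →L[ℝ] Ell (m × H)) := fun _ _ => rfl

theorem Equi.pow {m : Type} {T : Ell (m × H) →L[ℝ] Ell (m × H)} (hT : Equi T) (k : ℕ) :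
    Equi (T ^ k) := by
  induction k with
  | zero => exact Equi.one
  | succ k ih => rw [pow_succ]; exact ih.comp hT

theorem Equi.sum {m n : Type} {ι : Type} (s : Finset ι) {T : ι → Ell (m × H) →L[ℝ] Ell (n × H)}
    (hT : ∀ i, Equi (T i)) : Equi (∑ i ∈ s, T i) := by
  intro g f
  simp only [_root_.sum_apply, map_sum]
  exact Finset.sum_congr rfl fun i _ => hT i g f

theorem Equi.adjoint {m n : Type} {T : Ell (m × H) →L[ℝ] Ell (n × H)} (hT : Equi T) :
    Equi T.adjoint := by
  have hadj : ∀ {m : Type} (g : H) (f f' : Ell (m × H)),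
      ⟪f, pull (rshift m g) f'⟫_ℝ = ⟪pull (rshift m g⁻¹) f, f'⟫_ℝ := by
    intro m g f f'
    rw [inner_eq, inner_eq]
    let e : m × H ≃ m × H := (Equiv.refl m).prodCongr (Equiv.mulRight g)
    rw [← e.tsum_eq (fun a => (pull (rshift m g⁻¹) f) a * f' a)]
    refine tsum_congr fun a => ?_
    simp [e, Prod.map]
  intro g f
  apply ext_inner_left ℝ
  intro v
  rw [ContinuousLinearMap.adjoint_inner_right, hadj, hadj, ← hT,
    ContinuousLinearMap.adjoint_inner_right]

end trace

end


section

open scoped ENNReal InnerProductSpace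
open Filter Topology

section rank
variable {H : Type} [Group H]

set_option maxHeartbeats 2000000 in
theorem rank_lemma {m n : Type} [Fintype m] [Fintype n] (T : Ell (m × H) →L[ℝ] Ell (n × H))
    (hT : Equi T) : ∃ u : m → Ell (m × H), (∀ i, T (u i) = 0) ∧
      (∀ i v, T v = 0 → ⟪u i, v⟫_ℝ = v (i, 1)) ∧
      (Fintype.card m : ℝ) - Fintype.card n ≤ ∑ i, u i (i, 1) := by
  obtain ⟨c, hc0, hc1⟩ : ∃ c : ℝ, 0 < c ∧ c * ‖T‖ ^ 2 ≤ 1 := by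
    refine ⟨1 / (‖T‖ ^ 2 + 1), by positivity, ?_⟩
    rw [one_div, inv_mul_le_iff₀ (by positivity)]
    linarith
  set S := T.adjoint with hS
  have hSeq : Equi S := hT.adjoint
  set A : Ell (m × H) →L[ℝ] Ell (m × H) := 1 - c • S.comp T with hA
  set A' : Ell (n × H) →L[ℝ] Ell (n × H) := 1 - c • T.comp S with hA'
  have hAe : Equi A := Equi.one.sub ((hSeq.comp hT).smul c)
  have hAe' : Equi A' := Equi.one.sub ((hT.comp hSeq).smul c)
  have hAv : ∀ v, A v = v - c • S (T v) := fun v => rfl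
  have hAv' : ∀ v, A' v = v - c • T (S v) := fun v => rfl
  have hSin : ∀ v w, ⟪S v, w⟫_ℝ = ⟪v, T w⟫_ℝ := fun v w => ContinuousLinearMap.adjoint_inner_left _ _ _
  have hSin' : ∀ v w, ⟪v, S w⟫_ℝ = ⟪T v, w⟫_ℝ := fun v w => ContinuousLinearMap.adjoint_inner_right _ _ _
  have hSn : ‖S‖ = ‖T‖ := by simp [hS]
  have hnorm : ‖A‖ ≤ 1 := by
    apply ContinuousLinearMap.opNorm_le_bound _ zero_le_one
    intro v
    rw [one_mul]
    apply le_of_sq_le_sq _ (norm_nonneg _)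
    rw [hAv, @norm_sub_sq_real, inner_smul_right, hSin', real_inner_self_eq_norm_sq, norm_smul,
      mul_pow, Real.norm_eq_abs, sq_abs]
    have h1 : ‖S (T v)‖ ≤ ‖T‖ * ‖T v‖ := by rw [← hSn]; exact S.le_opNorm _
    have h2 : ‖S (T v)‖ ^ 2 ≤ ‖T‖ ^ 2 * ‖T v‖ ^ 2 := by
      rw [← mul_pow]; gcongr
    have h3 : c ^ 2 * ‖S (T v)‖ ^ 2 ≤ c * ‖T v‖ ^ 2 := by
      calc c ^ 2 * ‖S (T v)‖ ^ 2 ≤ c ^ 2 * (‖T‖ ^ 2 * ‖T v‖ ^ 2) := by gcongr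
        _ = c * (c * ‖T‖ ^ 2) * ‖T v‖ ^ 2 := by ring
        _ ≤ c * 1 * ‖T v‖ ^ 2 := by gcongr
        _ = _ := by ring
    have h4 : 0 ≤ c * ‖T v‖ ^ 2 := by positivity
    nlinarith
  have hpos1 : ∀ v, 0 ≤ ⟪A' v, v⟫_ℝ := by
    intro v
    rw [hAv', inner_sub_left, inner_smul_left, real_inner_self_eq_norm_sq, ← hSin',
      real_inner_self_eq_norm_sq]
    have h1 : ‖S v‖ ≤ ‖T‖ * ‖v‖ := by rw [← hSn]; exact S.le_opNorm _
    have h2 : ‖S v‖ ^ 2 ≤ ‖T‖ ^ 2 * ‖v‖ ^ 2 := by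
      rw [← mul_pow]; gcongr
    have h3 : c * ‖S v‖ ^ 2 ≤ ‖v‖ ^ 2 := by
      calc c * ‖S v‖ ^ 2 ≤ c * (‖T‖ ^ 2 * ‖v‖ ^ 2) := by gcongr
        _ = (c * ‖T‖ ^ 2) * ‖v‖ ^ 2 := by ring
        _ ≤ 1 * ‖v‖ ^ 2 := by gcongr
        _ = _ := by ring
    simp only [conj_trivial]
    linarith
  have hsym : ∀ v w, ⟪A' v, w⟫_ℝ = ⟪v, A' w⟫_ℝ := by
    intro v w
    rw [hAv', hAv', inner_sub_left, inner_sub_right, inner_smul_left, inner_smul_right,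
      ← hSin', hSin]
    simp
  have hsymk : ∀ k v w, ⟪(A' ^ k) v, w⟫_ℝ = ⟪v, (A' ^ k) w⟫_ℝ := by
    intro k
    induction k with
    | zero => intro v w; rfl
    | succ k ih =>
      intro v w
      rw [pow_succ, mul_apply_eq_comp, ih, hsym, ← mul_apply_eq_comp,
        ← pow_succ', pow_succ]
  have hpos : ∀ k v, 0 ≤ ⟪(A' ^ k) v, v⟫_ℝ := by
    intro k v
    rcases Nat.even_or_odd' k with ⟨l, rfl | rfl⟩
    · rw [two_mul, pow_add, mul_apply_eq_comp, hsymk]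
      exact real_inner_self_nonneg
    · have : 2 * l + 1 = l + 1 + l := by ring
      rw [this, pow_add, mul_apply_eq_comp, pow_add, mul_apply_eq_comp, hsymk, pow_one]
      exact hpos1 _
  have htrpos : ∀ k, 0 ≤ tr (A' ^ k) := by
    intro k
    refine Finset.sum_nonneg fun i _ => ?_
    rw [← inner_dl']
    exact hpos _ _
  have htr : ∀ k, (Fintype.card m : ℝ) - Fintype.card n ≤ tr (A ^ k) := by
    intro k
    have hcomm : ∀ j, (A' ^ j).comp T = T.comp (A ^ j) := by
      intro j
      induction j with
      | zero => rfl
      | succ j ih =>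
        have h1 : A'.comp T = T.comp A := by
          ext1 v
          simp [hAv, hAv']
        calc (A' ^ (j + 1)).comp T = (A' ^ j).comp (A'.comp T) := by rw [pow_succ]; rfl
          _ = ((A' ^ j).comp T).comp A := by rw [h1]; rfl
          _ = T.comp (A ^ (j + 1)) := by rw [ih, pow_succ]; rfl
    set Z : Ell (m × H) →L[ℝ] Ell (n × H) := c • ∑ j ∈ Finset.range k, (A' ^ j).comp T with hZ
    have hZe : Equi Z := (Equi.sum _ fun j => (hAe'.pow j).comp hT).smul c
    have h1 : S.comp Z = 1 - A ^ k := by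
      have : 1 - A = c • S.comp T := sub_sub_cancel _ _
      rw [← mul_neg_geom_sum, this, hZ]
      simp_rw [hcomm]
      ext1 v
      simp only [ContinuousLinearMap.comp_apply, _root_.smul_apply, _root_.sum_apply, map_smul, map_sum,
        mul_apply_eq_comp, Finset.smul_sum]
    have h2 : Z.comp S = 1 - A' ^ k := by
      have : 1 - A' = c • T.comp S := sub_sub_cancel _ _
      rw [← geom_sum_mul_neg, this, hZ]
      ext1 v
      simp only [ContinuousLinearMap.comp_apply, _root_.smul_apply, _root_.sum_apply, map_smul, map_sum,
        mul_apply_eq_comp, Finset.smul_sum]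
    have := tr_comm S Z hSeq hZe
    rw [h1, h2, tr_sub, tr_sub, tr_one, tr_one] at this
    have := htrpos k
    linarith
  have hfix : ∀ v, v ∈ A.eqLocus (1 : Ell (m × H) →L[ℝ] Ell (m × H)) ↔ T v = 0 := by
    intro v
    constructor
    · intro h
      have h : A v = v := h
      rw [hAv, sub_eq_self, smul_eq_zero] at h
      have h : S (T v) = 0 := h.resolve_left hc0.ne'
      have := hSin' v (T v)
      rw [h, inner_zero_right] at this
      exact inner_self_eq_zero.1 this.symm
    · intro h
      show A v = v
      rw [hAv, h, map_zero, smul_zero, sub_zero]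
  set K := A.eqLocus (1 : Ell (m × H) →L[ℝ] Ell (m × H)) with hK
  have hlim := fun i => A.tendsto_birkhoffAverage_orthogonalProjection hnorm (dl (i, 1))
  refine ⟨fun i => (K.orthogonalProjectionOnto (dl (i, 1)) : K), fun i => (hfix _).1 (Subtype.mem _), ?_, ?_⟩
  · intro i v hv
    have hv' := (hfix v).2 hv
    have := K.inner_orthogonalProjectionOnto_eq_of_mem_right ⟨v, hv'⟩ (dl (i, 1))
    rw [inner_dl] at this
    exact this
  · have hl : Tendsto (fun k => ∑ i, birkhoffAverage ℝ A _root_.id k (dl (i, 1)) (i, 1)) atTop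
      (𝓝 (∑ i, ((K.orthogonalProjectionOnto (dl (i, (1 : H))) : K) : Ell (m × H)) (i, 1))) := by
      refine tendsto_finsetSum _ fun i _ => ?_
      simp only [← inner_dl]
      exact Tendsto.inner tendsto_const_nhds (hlim i)
    refine ge_of_tendsto hl ?_
    filter_upwards [eventually_gt_atTop 0] with k hk
    have : ∑ i, birkhoffAverage ℝ A _root_.id k (dl (i, (1 : H))) (i, 1) =
        (k : ℝ)⁻¹ * ∑ j ∈ Finset.range k, tr (A ^ j) := by
      simp only [← inner_dl, birkhoffAverage, birkhoffSum, inner_smul_right, inner_sum]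
      rw [← Finset.mul_sum, Finset.sum_comm]
      congr 1
      refine Finset.sum_congr rfl fun j _ => Finset.sum_congr rfl fun i _ => ?_
      rw [inner_dl]
      have hit : ∀ (j : ℕ) v, A^[j] v = (A ^ j) v := by
        intro j
        induction j with
        | zero => intro v; rfl
        | succ j ih => intro v; rw [Function.iterate_succ_apply, ih, pow_succ]; rfl
      exact congrArg (fun w : Ell (m × H) => w (i, 1)) (hit j _)
    rw [this, le_inv_mul_iff₀ (by positivity)]
    calc _ = ∑ j ∈ Finset.range k, ((Fintype.card m : ℝ) - Fintype.card n) := by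
          simp [mul_sub]
      _ ≤ _ := Finset.sum_le_sum fun j _ => htr j
end rank

end


section

open scoped ENNReal InnerProductSpace
open Filter Topology

theorem exists_cocycle {H : Type} [Group H] {J R : Type} {B : J → Subgroup H} {x : R → H}
    (hB : Split B x) {M : Type} [AddCommGroup M] (a : H →* AddMonoid.End M) (v : J → M)
    (w : R → M) : ∃ d : H → M, (∀ g h, d (g * h) = d g + a g (d h)) ∧
      (∀ j, ∀ b ∈ B j, d b = a b (v j) - v j) ∧ ∀ l, d (x l) = w l := by
  have hmul : ∀ g h m, a (g * h) m = a g (a h m) := fun g h m => by rw [map_mul]; rfl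
  have ha : ∀ g m, a g (a g⁻¹ m) = m := fun g m => by
    rw [← hmul, mul_inv_cancel, map_one]; rfl
  have ha' : ∀ g m, a g⁻¹ (a g m) = m := fun g m => by
    rw [← hmul, inv_mul_cancel, map_one]; rfl
  let φ : ∀ j, B j →* Equiv.Perm M := fun j => MonoidHom.mk' (fun b =>
    { toFun := fun m => a b (m + v j) - v j
      invFun := fun m => a (b : H)⁻¹ (m + v j) - v j
      left_inv := fun m => by simp [ha']
      right_inv := fun m => by simp [ha] }) (by
      intro b b'
      ext m
      simp)
  let f : R → Equiv.Perm M := fun l =>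
    { toFun := fun m => a (x l) m + w l
      invFun := fun m => a (x l)⁻¹ (m - w l)
      left_inv := fun m => by simp [ha']
      right_inv := fun m => by
        show a (x l) (a (x l)⁻¹ (m - w l)) + w l = m
        rw [ha]; simp }
  obtain ⟨Φ, h1, h2⟩ := hB.1 (Equiv.Perm M) _ φ f
  have haff : ∀ h m, Φ h m = a h m + Φ h 0 := by
    intro h
    have hh : h ∈ Subgroup.closure ((⋃ i, (B i : Set H)) ∪ Set.range x) := by rw [hB.2]; trivial
    induction hh using Subgroup.closure_induction with
    | mem b hb =>
      intro m
      rcases hb with hb | ⟨l, rfl⟩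
      · obtain ⟨j, hb⟩ := Set.mem_iUnion.1 hb
        have := h1 j ⟨b, hb⟩
        simp only at this
        rw [this]
        show a b (m + v j) - v j = a b m + (a b (0 + v j) - v j)
        rw [map_add, zero_add]; abel
      · rw [h2]
        show a (x l) m + w l = a (x l) m + (a (x l) 0 + w l)
        rw [map_zero, zero_add]
    | one => intro m; simp
    | mul g h _ _ ihg ihh =>
      intro m
      rw [map_mul, Equiv.Perm.mul_apply, Equiv.Perm.mul_apply, ihh m, ihg, ihg (Φ h 0), hmul,
        map_add, add_assoc]
    | inv h _ ih =>
      intro m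
      have key : ∀ n, Φ h⁻¹ n = a h⁻¹ (n - Φ h 0) := by
        intro n
        rw [map_inv, Equiv.Perm.inv_eq_iff_eq, ih, ha]
        abel
      rw [key, key, ← map_add]
      congr 1; abel
  refine ⟨fun h => Φ h 0, ?_, ?_, ?_⟩
  · intro g h
    simp only [map_mul, Equiv.Perm.mul_apply]
    rw [haff g, add_comm]
  · intro j b hb
    have := h1 j ⟨b, hb⟩
    simp only at this
    simp only [this]
    show a b (0 + v j) - v j = _
    rw [zero_add]
  · intro l
    simp only [h2]
    show a (x l) 0 + w l = _
    simp

section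
variable {H : Type} [Group H]

/-- projection to the coordinate `i` -/
noncomputable def prj {m : Type} (i : m) : Ell (m × H) →L[ℝ] Ell (Unit × H) :=
  pull ⟨fun a => (i, a.2), fun a b h => by
    simp only [Prod.mk.injEq, true_and] at h
    exact Prod.ext rfl h⟩

@[simp] theorem prj_apply {m : Type} (i : m) (f : Ell (m × H)) (a : Unit × H) :
    prj i f a = f (i, a.2) := rfl

/-- left translation -/
noncomputable def lam (g : H) : Ell (Unit × H) →L[ℝ] Ell (Unit × H) :=
  pull ⟨fun a => (a.1, g⁻¹ * a.2), fun a b h => by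
    simp only [Prod.mk.injEq, mul_right_inj] at h
    exact Prod.ext rfl h.2⟩

@[simp] theorem lam_apply (g : H) (f : Ell (Unit × H)) (a : Unit × H) :
    lam g f a = f (a.1, g⁻¹ * a.2) := rfl

theorem lam_mul (g h : H) (f : Ell (Unit × H)) : lam (g * h) f = lam g (lam h f) := by
  ext a; simp [mul_assoc]

theorem lam_one (f : Ell (Unit × H)) : lam 1 f = f := by
  ext a; simp

theorem equi_prj {m : Type} (i : m) : Equi (H := H) (prj i) := by
  intro g f; ext a; simp

theorem equi_lam (g : H) : Equi (lam g) := by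
  intro h f; ext a; simp [mul_assoc]

theorem lam_fixed (g : H) (hg : ¬ IsOfFinOrder g) (f : Ell (Unit × H)) (hf : lam g f = f) :
    f = 0 := by
  have hn : ∀ (n : ℕ) u, f ((), g ^ n * u) = f ((), u) := by
    intro n
    induction n with
    | zero => intro u; simp
    | succ n ih =>
      intro u
      have := congrArg (fun w : Ell (Unit × H) => w ((), g ^ (n + 1) * u)) hf
      simp only [lam_apply, pow_succ'] at this
      rw [pow_succ', ← this, ← ih u]
      congr 2
      group
  ext ⟨⟨⟩, u⟩
  have hs := (Ell.summable_sq f)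
  have hinj : Function.Injective (fun n : ℕ => (((), g ^ n * u) : Unit × H)) := by
    intro n m h
    simp only [Prod.mk.injEq, mul_left_inj, true_and] at h
    exact injective_pow_iff_not_isOfFinOrder.2 hg h
  have := hs.comp_injective hinj
  simp only [Function.comp_def, hn] at this
  have h0 := (summable_const_iff _).1 this
  simpa using h0

open Classical in
theorem prj_adjoint {m : Type} (k l : m) (w : Ell (Unit × H)) :
    prj k ((prj l).adjoint w) = if k = l then w else 0 := by
  classical
  ext ⟨⟨⟩, h⟩
  rw [prj_apply, ← inner_dl, ContinuousLinearMap.adjoint_inner_right]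
  have : prj l (dl (k, h)) = if k = l then dl ((), h) else 0 := by
    ext ⟨⟨⟩, u⟩
    rw [prj_apply, dl_apply]
    split_ifs with h1 h2 h2
    · rw [dl_apply]; simp_all
    · simp_all
    · rw [dl_apply]; simp_all
    · simp
  simp only [this]
  split_ifs with h1
  · rw [inner_dl]
  · simp

theorem rank_family {m K : Type} [Fintype m] [Fintype K]
    (T : K → Ell (m × H) →L[ℝ] Ell (Unit × H)) (hT : ∀ k, Equi (T k)) :
    ∃ u : m → Ell (m × H), (∀ i k, T k (u i) = 0) ∧
      (∀ i, ‖u i‖ ^ 2 = u i (i, 1)) ∧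
      (Fintype.card m : ℝ) - Fintype.card K ≤ ∑ i, u i (i, 1) := by
  classical
  let T' : Ell (m × H) →L[ℝ] Ell (K × H) := ∑ k, ((prj k).adjoint).comp (T k)
  have hT' : Equi T' := Equi.sum _ fun k => ((equi_prj k).adjoint).comp (hT k)
  obtain ⟨u, h1, h2, h3⟩ := rank_lemma T' hT'
  refine ⟨u, ?_, ?_, h3⟩
  · intro i k
    have := congrArg (prj k) (h1 i)
    simp only [T', _root_.sum_apply, map_sum, ContinuousLinearMap.comp_apply, prj_adjoint,
      map_zero] at this
    simpa using this
  · intro i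
    rw [← h2 i _ (h1 i), real_inner_self_eq_norm_sq]
end

end


section

open scoped ENNReal InnerProductSpace
open Filter Topology

section
variable {H : Type} [Group H]

/-- The generating set used in the step lemma. -/
def S0 {J I Y : Type} (B : J → Subgroup H) (hh : I → H) (jj : I → J) (y : Y → H) : Set H :=
  {g | ∃ i, ∃ b ∈ B (jj i), g = hh i * b * (hh i)⁻¹} ∪ Set.range y

/-- post-composition with left translations as an action -/
noncomputable def lamAct (m : Type) :
    H →* AddMonoid.End (Ell (m × H) →L[ℝ] Ell (Unit × H)) where
  toFun g := AddMonoidHom.mk' (fun T => (lam g).comp T) (by intro S T; ext1 v; simp)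
  map_one' := by
    ext1 T; ext1 v; exact lam_one _
  map_mul' g h := by
    ext1 T; ext1 v; exact lam_mul _ _ _

theorem lamAct_apply {m : Type} (g : H) (T : Ell (m × H) →L[ℝ] Ell (Unit × H)) :
    lamAct m g T = (lam g).comp T := rfl

theorem L2main {J R I Y : Type} [Fintype J] [Fintype R] [Fintype I] [Fintype Y]
    {B : J → Subgroup H} {x : R → H} (hB : Split B x) (hh : I → H) (jj : I → J) (y : Y → H)
    (s : H) (k : ℕ) (hk : 1 ≤ k) (hsk : s ^ k ∈ Subgroup.closure (S0 B hh jj y))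
    (hgen : Subgroup.closure (insert s (S0 B hh jj y)) = ⊤)
    (hs : ¬ IsOfFinOrder s ∨ s = 1) (F : J → Finset H) (hF : ∀ j, ∀ b ∈ F j, b ∈ B j)
    (hFn : ∀ j, (F j).Nonempty) (e : J → ℝ) (he : ∀ j, 0 ≤ e j)
    (heF : ∀ j, (∀ i, jj i ≠ j) → 1 / ((F j).card : ℝ) ≤ e j) :
    (Fintype.card J : ℝ) + Fintype.card R ≤ Fintype.card I + Fintype.card Y + ∑ j, e j := by
  classical
  obtain ⟨d, d1, d2, d3⟩ := exists_cocycle hB (lamAct (H := H) (J ⊕ R))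
    (fun j => prj (Sum.inl j)) (fun l => prj (Sum.inr l))
  simp only [lamAct_apply] at d1 d2
  have d_one : d 1 = 0 := by
    have := d1 1 1
    rw [mul_one] at this
    have h2 : (lam 1).comp (d 1) = d 1 := by ext1 v; exact lam_one _
    rw [h2] at this
    simpa using this
  have hE : ∀ h, Equi (d h) := by
    intro h
    have hh' : h ∈ Subgroup.closure ((⋃ i, (B i : Set H)) ∪ Set.range x) := by rw [hB.2]; trivial
    induction hh' using Subgroup.closure_induction with
    | mem b hb =>
      rcases hb with hb | ⟨l, rfl⟩
      · obtain ⟨j, hb⟩ := Set.mem_iUnion.1 hb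
        rw [d2 j b hb]
        exact ((equi_lam b).comp (equi_prj _)).sub (equi_prj _)
      · rw [d3]; exact equi_prj _
    | one => rw [d_one]; intro g f; simp
    | mul g h _ _ ihg ihh => rw [d1]; exact ihg.add ((equi_lam g).comp ihh)
    | inv h _ ih =>
      have h1 := d1 h⁻¹ h
      rw [inv_mul_cancel, d_one] at h1
      rw [eq_neg_of_add_eq_zero_left h1.symm]
      have := (((equi_lam h⁻¹).comp ih).smul (-1))
      simpa using this
  let T : I ⊕ Y → Ell ((J ⊕ R) × H) →L[ℝ] Ell (Unit × H) :=
    Sum.elim (fun i => (lam (hh i)).comp (prj (Sum.inl (jj i))) - d (hh i)) (fun t => d (y t))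
  have hT : ∀ c, Equi (T c) := by
    rintro (i | t)
    · exact ((equi_lam _).comp (equi_prj _)).sub (hE _)
    · exact hE _
  obtain ⟨u, u1, u2, u3⟩ := rank_family T hT
  have hzero : ∀ c h, d h (u c) = 0 := by
    intro c
    have c1 : ∀ g h, d (g * h) (u c) = d g (u c) + lam g (d h (u c)) := by
      intro g h; rw [d1]; rfl
    have c0 : d 1 (u c) = 0 := by rw [d_one]; rfl
    let Z : Subgroup H :=
      { carrier := {g | d g (u c) = 0}
        one_mem' := c0
        mul_mem' := by
          intro g h hg hh'
          simp only [Set.mem_ofPred_eq] at hg hh' ⊢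
          rw [c1, hg, hh', map_zero, add_zero]
        inv_mem' := by
          intro g hg
          simp only [Set.mem_ofPred_eq] at hg ⊢
          have := c1 g⁻¹ g
          rw [inv_mul_cancel, c0, hg, map_zero, add_zero] at this
          exact this.symm }
    have hZ : ∀ g, g ∈ Z ↔ d g (u c) = 0 := fun g => Iff.rfl
    have hS : S0 B hh jj y ⊆ Z := by
      rintro g (⟨i, b, hb, rfl⟩ | ⟨t, rfl⟩)
      · have h1 : lam (hh i) (prj (Sum.inl (jj i)) (u c)) - d (hh i) (u c) = 0 := u1 c (Sum.inl i)
        have h2 : d b (u c) = lam b (prj (Sum.inl (jj i)) (u c)) - prj (Sum.inl (jj i)) (u c) := by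
          rw [d2 _ b hb]; rfl
        have h1 := (sub_eq_zero.1 h1).symm
        have h3 := c1 (hh i) (hh i)⁻¹
        rw [mul_inv_cancel, c0] at h3
        have h4 : d (hh i)⁻¹ (u c) = - prj (Sum.inl (jj i)) (u c) := by
          have := congrArg (lam (hh i)⁻¹) h3
          rw [map_zero, map_add, h1, ← lam_mul, ← lam_mul, inv_mul_cancel, lam_one, lam_one] at this
          exact eq_neg_of_add_eq_zero_right this.symm
        show d (hh i * b * (hh i)⁻¹) (u c) = 0
        rw [mul_assoc, c1, c1, h1, h2, h4]
        simp
        abel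
      · exact u1 c (Sum.inr t)
    have hsZ : s ∈ Z := by
      rcases hs with hs | hs
      · have hskZ : d (s ^ k) (u c) = 0 := (Subgroup.closure_le Z).2 hS hsk
        have h1 := c1 (s ^ k) s
        rw [← pow_succ, pow_succ', c1, hskZ, map_zero, add_zero, zero_add] at h1
        refine (hZ s).2 (lam_fixed (s ^ k) ?_ _ h1.symm)
        intro h
        exact hs ((isOfFinOrder_pow.1 h).resolve_right (by omega))
      · rw [hs]; exact Z.one_mem
    intro h
    have : (⊤ : Subgroup H) ≤ Z := by
      rw [← hgen, Subgroup.closure_le]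
      exact Set.insert_subset hsZ hS
    exact (hZ h).1 (this trivial)
  have hR : ∀ l, u (Sum.inr l) (Sum.inr l, 1) = 0 := by
    intro l
    have := hzero (Sum.inr l) (x l)
    rw [d3] at this
    exact congrArg (fun w : Ell (Unit × H) => w ((), 1)) this
  have hJ : ∀ j, u (Sum.inl j) (Sum.inl j, 1) ≤ e j := by
    intro j
    by_cases hj : ∀ i, jj i ≠ j
    · refine le_trans ?_ (heF j hj)
      have hconst : ∀ b ∈ F j, u (Sum.inl j) (Sum.inl j, b) = u (Sum.inl j) (Sum.inl j, 1) := by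
        intro b hb
        have h1 := hzero (Sum.inl j) b
        rw [d2 j b (hF j b hb)] at h1
        have h1 := congrArg (fun w : Ell (Unit × H) => w ((), b)) (sub_eq_zero.1 h1)
        simp at h1
        exact h1.symm
      set t := u (Sum.inl j) (Sum.inl j, 1) with ht
      have h2 : ((F j).card : ℝ) * t ^ 2 ≤ t := by
        refine le_trans ?_ (u2 (Sum.inl j)).le
        rw [Ell.norm_sq]
        have := (Ell.summable_sq (u (Sum.inl j))).sum_le_tsum
          ((F j).map ⟨fun b => (Sum.inl j, b), fun a b h => by simpa using h⟩)
          (fun _ _ => sq_nonneg _)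
        refine le_trans (le_of_eq ?_) this
        rw [Finset.sum_map, Finset.sum_congr rfl (fun b hb => by
          show (u (Sum.inl j) (Sum.inl j, b)) ^ 2 = t ^ 2
          rw [hconst b hb])]
        simp
      have hc : (0 : ℝ) < (F j).card := by exact_mod_cast (hFn j).card_pos
      rw [le_div_iff₀ hc]
      by_contra hcon
      push Not at hcon
      have htpos : 0 < t := by
        by_contra h0
        have : t * ((F j).card : ℝ) ≤ 0 := mul_nonpos_of_nonpos_of_nonneg (by linarith) hc.le
        linarith
      nlinarith
    · push Not at hj
      obtain ⟨i, rfl⟩ := hj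
      have h1 : lam (hh i) (prj (Sum.inl (jj i)) (u (Sum.inl (jj i)))) - d (hh i) (u (Sum.inl (jj i))) = 0 :=
        u1 _ (Sum.inl i)
      rw [hzero, sub_zero] at h1
      have := congrArg (fun w : Ell (Unit × H) => w ((), hh i)) h1
      simp at this
      rw [this]; exact he _
  have : ∑ i, u i (i, 1) ≤ ∑ j, e j := by
    rw [Fintype.sum_sum_type]
    simp only [hR, Finset.sum_const_zero, add_zero]
    exact Finset.sum_le_sum fun j _ => hJ j
  simp only [Fintype.card_sum, Nat.cast_add] at u3
  linarith

end

end


section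

section
variable {H : Type} [Group H]

/-- spans of values of additive characters -/
theorem span_char {V kk : Type} [Field kk] [AddCommGroup V] [Module kk V]
    (D : H →* Multiplicative V) (W : Submodule kk V) (S : Set H)
    (hS : ∀ g ∈ S, (D g).toAdd ∈ W) (g : H) (hg : g ∈ Subgroup.closure S) :
    (D g).toAdd ∈ W := by
  induction hg using Subgroup.closure_induction with
  | mem g hg => exact hS g hg
  | one => simp
  | mul g h _ _ ihg ihh => rw [map_mul, toAdd_mul]; exact W.add_mem ihg ihh
  | inv g _ ih => rw [map_inv, toAdd_inv]; exact W.neg_mem ih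

theorem rank_free_le {J R I Y : Type} [Fintype J] [Fintype R] [Fintype I] [Fintype Y]
    {B : J → Subgroup H} {x : R → H} (hB : Split B x) (hh : I → H) (jj : I → J) (y : Y → H)
    (s : H) (k : ℕ) (hk : 1 ≤ k) (hsk : s ^ k ∈ Subgroup.closure (S0 B hh jj y))
    (hgen : Subgroup.closure (insert s (S0 B hh jj y)) = ⊤) :
    Fintype.card R ≤ Fintype.card Y := by
  classical
  obtain ⟨D, D1, D2⟩ := hB.1 (Multiplicative (R → ℚ)) _ (fun _ => 1)
    (fun l => Multiplicative.ofAdd (Pi.single l 1))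
  let W : Submodule ℚ (R → ℚ) := Submodule.span ℚ (Set.range fun t => (D (y t)).toAdd)
  have hS : ∀ g ∈ S0 B hh jj y, (D g).toAdd ∈ W := by
    rintro g (⟨i, b, hb, rfl⟩ | ⟨t, rfl⟩)
    · have := D1 _ ⟨b, hb⟩
      simp only [MonoidHom.one_apply] at this
      simp [this]
    · exact Submodule.subset_span ⟨t, rfl⟩
  have hs : (D s).toAdd ∈ W := by
    have := span_char D W _ hS _ hsk
    rw [map_pow, toAdd_pow, ← Nat.cast_smul_eq_nsmul ℚ] at this
    have h2 := W.smul_mem ((k : ℚ)⁻¹) this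
    rwa [inv_smul_smul₀ (by positivity)] at h2
  have hall : ∀ g, (D g).toAdd ∈ W := by
    intro g
    refine span_char D W (insert s (S0 B hh jj y)) ?_ g (by rw [hgen]; trivial)
    rintro g (rfl | hg)
    · exact hs
    · exact hS g hg
  have hW : W = ⊤ := by
    rw [eq_top_iff, ← (Pi.basisFun ℚ R).span_eq, Submodule.span_le]
    rintro _ ⟨l, rfl⟩
    have := hall (x l)
    rw [D2] at this
    simpa using this
  have := finrank_range_le_card (R := ℚ) (fun t => (D (y t)).toAdd)
  rw [Set.finrank] at this
  change Module.finrank ℚ W ≤ _ at this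
  rw [hW, finrank_top, Module.finrank_fintype_fun_eq_card] at this
  exact this

theorem rank_two {J R I Y : Type} [Fintype J] [Fintype R] [Fintype I] [Fintype Y]
    {B : J → Subgroup H} {x : R → H} (hB : Split B x) (hh : I → H) (jj : I → J) (y : Y → H)
    (s : H) (hgen : Subgroup.closure (insert s (S0 B hh jj y)) = ⊤)
    (p : J → Prop) [DecidablePred p] (hp : ∀ j, p j → ∀ i, jj i ≠ j)
    (hcard : ∀ j, p j → Nat.card (B j) = 2) :
    Fintype.card {j // p j} + Fintype.card R ≤ Fintype.card Y + 1 := by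
  classical
  have he : ∀ j, p j → Nonempty (B j ≃* Multiplicative (ZMod 2)) := fun j hj =>
    haveI : Fact (Nat.Prime 2) := ⟨Nat.prime_two⟩
    ⟨mulEquivOfPrimeCardEq (p := 2) (hcard j hj) (by simp)⟩
  let P := {j // p j} ⊕ R
  let φ : ∀ j, B j →* Multiplicative (P → ZMod 2) := fun j => if h : p j then
    (AddMonoidHom.toMultiplicative (AddMonoidHom.single (fun _ : P => ZMod 2) (Sum.inl ⟨j, h⟩))).comp
      (he j h).some.toMonoidHom else 1
  obtain ⟨D, D1, D2⟩ := hB.1 (Multiplicative (P → ZMod 2)) _ φ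
    (fun l => Multiplicative.ofAdd (Pi.single (Sum.inr l) 1))
  let v : Option Y → P → ZMod 2 := fun o => o.elim (D s).toAdd fun t => (D (y t)).toAdd
  let W : Submodule (ZMod 2) (P → ZMod 2) := Submodule.span (ZMod 2) (Set.range v)
  have hall : ∀ g, (D g).toAdd ∈ W := by
    intro g
    refine span_char D W (insert s (S0 B hh jj y)) ?_ g (by rw [hgen]; trivial)
    rintro g (rfl | ⟨i, b, hb, rfl⟩ | ⟨t, rfl⟩)
    · exact Submodule.subset_span ⟨none, rfl⟩
    · have := D1 _ ⟨b, hb⟩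
      have hn : ¬ p (jj i) := fun h => hp _ h i rfl
      simp only [φ, dif_neg hn, MonoidHom.one_apply] at this
      simp [this]
    · exact Submodule.subset_span ⟨some t, rfl⟩
  have hW : W = ⊤ := by
    rw [eq_top_iff, ← (Pi.basisFun (ZMod 2) P).span_eq, Submodule.span_le]
    rintro _ ⟨⟨j, hj⟩ | l, rfl⟩
    · have := hall ((he j hj).some.symm (Multiplicative.ofAdd 1) : B j)
      rw [D1] at this
      simp only [φ, dif_pos hj] at this
      simpa using this
    · have := hall (x l)
      rw [D2] at this
      simpa using this
  have := finrank_range_le_card (R := ZMod 2) v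
  rw [Set.finrank] at this
  change Module.finrank (ZMod 2) W ≤ _ at this
  rw [hW, finrank_top, Module.finrank_fintype_fun_eq_card] at this
  simpa [P] using this

theorem L2kill {J R I Y : Type} [Fintype J] [Fintype R] [Fintype I] [Fintype Y]
    {B : J → Subgroup H} {x : R → H} (hB : Split B x) (hh : I → H) (jj : I → J) (y : Y → H)
    (s : H) (hgen : Subgroup.closure (insert s (S0 B hh jj y)) = ⊤)
    (p : J → Prop) [DecidablePred p] (hp : ∀ j, p j → ∀ i, jj i ≠ j)
    (F : ∀ j, Finset (B j)) (hFn : ∀ j, (F j).Nonempty) (e : J → ℝ) (he : ∀ j, 0 ≤ e j)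
    (heF : ∀ j, 1 / ((F j).card : ℝ) ≤ e j) :
    (Fintype.card {j // p j} : ℝ) + Fintype.card R ≤ Fintype.card Y + 1 + ∑ j : {j // p j}, e j := by
  classical
  let C : {j // p j} → Type := fun j => B j
  letI : ∀ j, Group (C j) := fun j => inferInstanceAs (Group (B j))
  let U := Monoid.Coprod (Monoid.CoprodI C) (FreeGroup R)
  have hU := split_coprod (R := R) C
  let inc : ∀ j, C j →* U := fun j => Monoid.Coprod.inl.comp Monoid.CoprodI.of
  have hinc : ∀ j, Function.Injective (inc j) := fun j =>
    Monoid.Coprod.inl_injective.comp (Monoid.CoprodI.of_injective j)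
  let φ : ∀ j, B j →* U := fun j => if h : p j then inc ⟨j, h⟩ else 1
  obtain ⟨Ψ, P1, P2⟩ := hB.1 U _ φ (fun l => Monoid.Coprod.inr (FreeGroup.of l))
  let y' : Option Y → U := fun o => o.elim (Ψ s) fun t => Ψ (y t)
  have hs0 : Set.range y' ⊆ S0 (fun j => (inc j).range) (fun e : Empty => e.elim) (fun e : Empty => e.elim) y' :=
    Set.subset_union_right
  have hgen' : Subgroup.closure (S0 (fun j => (inc j).range) (fun e : Empty => e.elim)
      (fun e : Empty => e.elim) y') = ⊤ := by
    have hall : ∀ g, Ψ g ∈ Subgroup.closure (S0 (fun j => (inc j).range) (fun e : Empty => e.elim)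
      (fun e : Empty => e.elim) y') := by
      intro g
      have : (⊤ : Subgroup H) ≤ (Subgroup.closure (S0 (fun j => (inc j).range)
          (fun e : Empty => e.elim) (fun e : Empty => e.elim) y')).comap Ψ := by
        rw [← hgen, Subgroup.closure_le]
        rintro g (rfl | ⟨i, b, hb, rfl⟩ | ⟨t, rfl⟩)
        · exact Subgroup.subset_closure (hs0 ⟨none, rfl⟩)
        · have := P1 _ ⟨b, hb⟩
          have hn : ¬ p (jj i) := fun h => hp _ h i rfl
          simp only [φ, dif_neg hn, MonoidHom.one_apply] at this
          simp [this]
        · exact Subgroup.subset_closure (hs0 ⟨some t, rfl⟩)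
      exact this trivial
    rw [eq_top_iff, ← hU.2, Subgroup.closure_le]
    rintro g (hg | ⟨l, rfl⟩)
    · obtain ⟨⟨j, hj⟩, b, rfl⟩ := Set.mem_iUnion.1 hg
      have := P1 j b
      simp only [φ, dif_pos hj] at this
      have h2 := hall b
      rw [this] at h2
      exact h2
    · have h2 := hall (x l)
      rw [P2] at h2
      exact h2
  have := L2main hU (fun e : Empty => e.elim) (fun e : Empty => e.elim) y' 1 1 le_rfl
    (by simp)
    (by
      rw [eq_top_iff, ← hgen']
      exact Subgroup.closure_mono (Set.subset_insert _ _)) (Or.inr rfl)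
    (fun j => (F j).map ⟨inc j, hinc j⟩) (by
      intro j b hb
      obtain ⟨c, _, rfl⟩ := Finset.mem_map.1 hb
      exact ⟨c, rfl⟩) (fun j => (hFn j).map) (fun j => e j) (fun j => he j) (fun j _ => by
      rw [Finset.card_map]; exact heF j)
  simp only [Fintype.card_eq_zero, Fintype.card_option, Nat.cast_add, Nat.cast_zero, zero_add, Nat.cast_one] at this
  exact this

theorem step {J R I Y : Type} [Fintype J] [Fintype R] [Fintype I] [Fintype Y]
    {B : J → Subgroup H} {x : R → H} (hB : Split B x) (hBn : ∀ j, B j ≠ ⊥)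
    (hh : I → H) (jj : I → J) (y : Y → H)
    (s : H) (k : ℕ) (hk : 1 ≤ k) (hsk : s ^ k ∈ Subgroup.closure (S0 B hh jj y))
    (hgen : Subgroup.closure (insert s (S0 B hh jj y)) = ⊤)
    (hs : ¬ IsOfFinOrder s ∨ s = 1) :
    Fintype.card R < Fintype.card Y ∨
      (Fintype.card R = Fintype.card Y ∧ Fintype.card J ≤ Fintype.card I) := by
  classical
  rcases (rank_free_le hB hh jj y s k hk hsk hgen).lt_or_eq with hlt | heq
  · exact Or.inl hlt
  refine Or.inr ⟨heq, ?_⟩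
  have hb : ∀ j, ∃ b : B j, b ≠ 1 := by
    intro j
    obtain ⟨b, hb, hb1⟩ := (Subgroup.ne_bot_iff_exists_ne_one).1 (hBn j) |>.elim
      fun b hb => (⟨b.1, b.2, fun h => hb (Subtype.ext h)⟩ : ∃ b, b ∈ B j ∧ b ≠ 1)
    exact ⟨⟨b, hb⟩, fun h => hb1 (congrArg Subtype.val h)⟩
  choose b hb using hb
  let p : J → Prop := fun j => ∀ i, jj i ≠ j
  have hreal : (Fintype.card R : ℝ) = Fintype.card Y := by exact_mod_cast heq
  have hle : Fintype.card {j // p j} ≤ 1 := by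
    by_contra hgt
    push Not at hgt
    have hc : ∀ j, p j → Nat.card (B j) = 2 := by
      intro j hj
      by_contra hne
      have : ∃ c : B j, c ≠ 1 ∧ c ≠ b j := by
        by_contra hno
        push Not at hno
        refine hne (Nat.card_eq_two_iff.2 ⟨1, b j, (hb j).symm, ?_⟩)
        rw [Set.eq_univ_iff_forall]
        intro c
        by_cases h1 : c = 1
        · simp [h1]
        · simp [hno c h1]
      obtain ⟨c, hc1, hc2⟩ := this
      have h3 : ({1, b j, c} : Finset (B j)).card = 3 :=
        Finset.card_eq_three.2 ⟨1, b j, c, (hb j).symm, hc1.symm, hc2.symm, rfl⟩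
      have key := L2kill hB hh jj y s hgen p (fun _ h => h)
        (fun j' => if h : j' = j then h ▸ {1, b j, c} else {1, b j'})
        (by
          intro j'
          by_cases h : j' = j
          · subst h; simp
          · simp [h])
        (fun j' => 1 / 2 - if j' = j then 1 / 6 else 0)
        (by intro j'; split_ifs <;> norm_num)
        (by
          intro j'
          by_cases h : j' = j
          · subst h; simp only [dif_pos, h3]; norm_num
          · simp only [dif_neg h, if_neg h, Finset.card_pair (hb j').symm]; norm_num)
      have hsum : ∑ j' : {j // p j}, ((1 : ℝ) / 2 - if (j' : J) = j then 1 / 6 else 0)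
          = Fintype.card {j // p j} / 2 - 1 / 6 := by
        rw [Finset.sum_sub_distrib]
        have : ∀ j' : {j // p j}, ((j' : J) = j) ↔ (j' = ⟨j, hj⟩) := fun j' => by
          rw [Subtype.ext_iff]
        simp only [this, Finset.sum_ite_eq', Finset.mem_univ, if_true, Finset.sum_const,
          Finset.card_univ, nsmul_eq_mul]
        ring
      rw [hsum] at key
      have h2 : (2 : ℝ) ≤ Fintype.card {j // p j} := by exact_mod_cast hgt
      linarith
    have := rank_two hB hh jj y s hgen p (fun _ h => h) hc
    omega
  have key := L2main hB hh jj y s k hk hsk hgen hs (fun j => {1, (b j : H)})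
    (by
      intro j c hc
      simp only [Finset.mem_insert, Finset.mem_singleton] at hc
      rcases hc with rfl | rfl
      · exact one_mem _
      · exact (b j).2) (fun j => by simp) (fun j => if p j then 1 / 2 else 0)
    (by intro j; positivity)
    (by
      intro j hj
      have : (1 : H) ≠ b j := fun h => hb j (Subtype.ext h.symm)
      rw [if_pos hj, Finset.card_pair this]; norm_num)
  have hsum : ∑ j, (if p j then (1 : ℝ) / 2 else 0) = Fintype.card {j // p j} / 2 := by
    rw [← Finset.sum_filter, Finset.sum_const, nsmul_eq_mul, Fintype.card_subtype]; ring
  rw [hsum] at key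
  have h1 : (Fintype.card {j // p j} : ℝ) ≤ 1 := by exact_mod_cast hle
  have h2 : (Fintype.card J : ℝ) < Fintype.card I + 1 := by linarith
  have h3 : Fintype.card J < Fintype.card I + 1 := by exact_mod_cast h2
  omega
end

end


section

/-- `G` is a free product of `p` nontrivial groups and a free group of rank `q`. -/
def HasSplit (G : Type) [Group G] (q p : ℕ) : Prop :=
  ∃ (I Y : Type) (_ : Fintype I) (_ : Fintype Y) (A : I → Subgroup G) (y : Y → G),
    Split A y ∧ (∀ i, A i ≠ ⊥) ∧ Fintype.card Y = q ∧ Fintype.card I = p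

/-- the lexicographic order -/
def LexLE (q p q' p' : ℕ) : Prop := q < q' ∨ (q = q' ∧ p ≤ p')

theorem LexLE.trans {a b c d e f : ℕ} (h : LexLE a b c d) (h' : LexLE c d e f) :
    LexLE a b e f := by
  unfold LexLE at *; omega

theorem step_sub {H : Type} [Group H] {r b : ℕ} (hH : HasSplit H r b) {G : Type} [Group G]
    [Group.FG G] (ι : G →* H) (hι : Function.Injective ι) (s : H) (k : ℕ) (hk : 1 ≤ k)
    (hsk : s ^ k ∈ ι.range) (hgen : Subgroup.closure (insert s (ι.range : Set H)) = ⊤)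
    (hs : ¬ IsOfFinOrder s ∨ s = 1) : ∃ q p, HasSplit G q p ∧ LexLE r b q p := by
  obtain ⟨J, R, _, _, B, x, hB, hBn, rfl, rfl⟩ := hH
  obtain ⟨I, Y, _, _, A, y, hA, hAn, hc⟩ := kurosh_fg hB ι hι
  have := Fintype.ofFinite I
  have := Fintype.ofFinite Y
  choose hh jj hc using hc
  refine ⟨_, _, ⟨I, Y, inferInstance, inferInstance, A, y, hA, hAn, rfl, rfl⟩, ?_⟩
  have hle : ι.range ≤ Subgroup.closure (S0 B (fun i => (hh i)⁻¹) jj (fun t => ι (y t))) := by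
    rw [MonoidHom.range_eq_map, ← hA.2, Subgroup.map_le_iff_le_comap, Subgroup.closure_le]
    rintro g (hg | ⟨t, rfl⟩)
    · obtain ⟨i, hg⟩ := Set.mem_iUnion.1 hg
      refine Subgroup.subset_closure (Or.inl ⟨i, _, hc i g hg, ?_⟩)
      group
    · exact Subgroup.subset_closure (Or.inr ⟨t, rfl⟩)
  refine step hB hBn (fun i => (hh i)⁻¹) jj (fun t => ι (y t)) s k hk (hle hsk) ?_ hs
  rw [eq_top_iff, ← hgen, Subgroup.closure_le]
  refine Set.insert_subset (Subgroup.subset_closure (Set.mem_insert _ _)) ?_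
  exact fun g hg => Subgroup.closure_mono (Set.subset_insert _ _) (hle hg)

theorem chain {H : Type} [Group H] {r b : ℕ} (hH : HasSplit H r b) (n : ℕ) :
    ∀ (G : Type) [Group G] [Group.FG G] (f : G →* H) (_ : Function.Injective f)
      (s : Fin n → H) (k : Fin n → ℕ) (_ : ∀ i, 1 ≤ k i) (_ : ∀ i, s i ^ k i ∈ f.range)
      (_ : Subgroup.closure ((f.range : Set H) ∪ Set.range s) = ⊤)
      (_ : ∀ i, ¬ IsOfFinOrder (s i)), ∃ q p, HasSplit G q p ∧ LexLE r b q p := by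
  induction n with
  | zero =>
    intro G _ _ f hf s k hk hsk hgen hs
    refine step_sub hH f hf 1 1 le_rfl (by simp [one_mem]) ?_ (Or.inr rfl)
    rw [eq_top_iff, ← hgen]
    apply Subgroup.closure_mono
    rintro g (hg | ⟨i, rfl⟩)
    · exact Set.mem_insert_of_mem _ hg
    · exact i.elim0
  | succ n ih =>
    intro G _ _ f hf s k hk hsk hgen hs
    let G1 : Subgroup H := f.range ⊔ Subgroup.zpowers (s 0)
    have hfG : ∀ g, f g ∈ G1 := fun g => (le_sup_left : f.range ≤ G1) ⟨g, rfl⟩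
    have hsG : s 0 ∈ G1 := (le_sup_right : Subgroup.zpowers (s 0) ≤ G1) (Subgroup.mem_zpowers _)
    have hfg : Group.FG G1 := by
      rw [Group.fg_iff_subgroup_fg]
      refine Subgroup.FG.sup ((Group.fg_iff_subgroup_fg _).1 inferInstance) ⟨{s 0}, ?_⟩
      rw [Finset.coe_singleton, Subgroup.zpowers_eq_closure]
    obtain ⟨q, p, h1, h2⟩ := ih G1 G1.subtype G1.subtype_injective (fun i => s i.succ)
      (fun i => k i.succ) (fun i => hk _) (fun i => by
        rw [Subgroup.range_subtype]
        exact (le_sup_left : f.range ≤ G1) (hsk _)) (by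
        rw [eq_top_iff, ← hgen, Subgroup.closure_le, Subgroup.range_subtype]
        rintro g (hg | ⟨i, rfl⟩)
        · exact Subgroup.subset_closure (Or.inl ((le_sup_left : f.range ≤ G1) hg))
        · refine Fin.cases ?_ (fun i => ?_) i
          · exact Subgroup.subset_closure (Or.inl hsG)
          · exact Subgroup.subset_closure (Or.inr ⟨i, rfl⟩)) (fun i => hs _)
    obtain ⟨q', p', h3, h4⟩ := step_sub h1 (f.codRestrict G1 hfG)
      (fun a b hab => hf (congrArg Subtype.val hab)) ⟨s 0, hsG⟩ (k 0) (hk 0) (by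
        obtain ⟨g, hg⟩ := hsk 0
        exact ⟨g, Subtype.ext hg⟩) (by
        rw [eq_top_iff]
        rintro ⟨g, hg⟩ -
        have key : G1 ≤ (Subgroup.closure (insert (⟨s 0, hsG⟩ : G1)
            ((f.codRestrict G1 hfG).range : Set G1))).map G1.subtype := by
          refine sup_le ?_ ?_
          · rintro _ ⟨g, rfl⟩
            exact ⟨⟨f g, hfG g⟩, Subgroup.subset_closure (Or.inr ⟨g, rfl⟩), rfl⟩
          · rw [Subgroup.zpowers_le]
            exact ⟨_, Subgroup.subset_closure (Or.inl rfl), rfl⟩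
        obtain ⟨g', hg', h⟩ := key hg
        have : g' = ⟨g, hg⟩ := Subtype.ext h
        rw [← this]; exact hg') (Or.inl fun h => hs 0 (by
          have := G1.subtype.isOfFinOrder h
          exact this))
    exact ⟨q', p', h3, h2.trans h4⟩

theorem FreelyIndecomposable.congr {A B : Type} [Group A] [Group B] (e : A ≃* B)
    (h : FreelyIndecomposable A) : FreelyIndecomposable B :=
  fun C D _ _ ⟨e'⟩ => h C D _ _ ⟨e.trans e'⟩

theorem HasScott.split {G : Type} [Group G] {a : ℤ} {p : ℕ} (h : HasScott G a p) :
    ∃ (q : ℕ) (A : Fin p → Subgroup G) (y : Fin q → G), a = q - 1 ∧ Split A y ∧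
      ∀ i, Nontrivial (A i) ∧ FreelyIndecomposable (A i) ∧ IsEmpty (A i ≃* Multiplicative ℤ) := by
  obtain ⟨q, H, _, ha, h1, h2, h3, ⟨e⟩⟩ := h
  refine ⟨q, _, _, ha, (split_coprod (R := Fin q) H).map e.symm, fun i => ?_⟩
  let f : H i →* G := e.symm.toMonoidHom.comp (Monoid.Coprod.inl.comp Monoid.CoprodI.of)
  have hf : Function.Injective f :=
    e.symm.injective.comp (Monoid.Coprod.inl_injective.comp (Monoid.CoprodI.of_injective i))
  have e' : H i ≃* ((Monoid.Coprod.inl.comp (Monoid.CoprodI.of (M := H) (i := i))).range.map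
      e.symm.toMonoidHom : Subgroup G) :=
    (f.ofInjective hf).trans (MulEquiv.subgroupCongr (by rw [MonoidHom.map_range]))
  have := h1 i
  exact ⟨e'.symm.toEquiv.nontrivial, (h2 i).congr e', ⟨fun e'' => (h3 i).false (e'.trans e'')⟩⟩

theorem HasScott.hasSplit {G : Type} [Group G] {a : ℤ} {p : ℕ} (h : HasScott G a p) :
    ∃ q : ℕ, a = q - 1 ∧ HasSplit G q p := by
  obtain ⟨q, A, y, ha, h1, h2⟩ := h.split
  refine ⟨q, ha, Fin p, Fin q, inferInstance, inferInstance, A, y, h1, fun i => ?_, by simp, by simp⟩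
  exact (Subgroup.nontrivial_iff_ne_bot _).1 (h2 i).1

/-- the Grushko decomposition is maximal -/
theorem grushko_max {G : Type} [Group G] {a : ℤ} {p : ℕ} (h : HasScott G a p) {r b : ℕ}
    (hG : HasSplit G r b) : ∃ q : ℕ, a = q - 1 ∧ LexLE r b q p := by
  obtain ⟨q, A, y, ha, h1, h2⟩ := h.split
  obtain ⟨J, R, _, _, B, x, hB, hBn, rfl, rfl⟩ := hG
  have hc := fun i => indec_conj hB (A i) (h2 i).1 (h2 i).2.1 (h2 i).2.2
  choose hh jj hc using hc
  refine ⟨q, ha, ?_⟩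
  have hle : Subgroup.closure (S0 B (fun i => (hh i)⁻¹) jj y) = ⊤ := by
    rw [eq_top_iff, ← h1.2, Subgroup.closure_le]
    rintro g (hg | ⟨t, rfl⟩)
    · obtain ⟨i, hg⟩ := Set.mem_iUnion.1 hg
      refine Subgroup.subset_closure (Or.inl ⟨i, _, hc i g hg, ?_⟩)
      group
    · exact Subgroup.subset_closure (Or.inr ⟨t, rfl⟩)
  have := step hB hBn (fun i => (hh i)⁻¹) jj y 1 1 le_rfl (by simp) (by
    rw [eq_top_iff, ← hle]
    exact Subgroup.closure_mono (Set.subset_insert _ _)) (Or.inr rfl)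
  simpa [LexLE] using this

end

/-- Let `G` be finitely generated, `γ₁, …, γ_n` indivisible elements of `G`
representing distinct conjugacy classes with `γᵢ` not conjugate to `γⱼ^{±1}`
for `i ≠ j`, and let `G' = ⟨G, sᵢ | sᵢ^{kᵢ} = γᵢ⟩` with all `kᵢ ≥ 2`.  If `H`
is a quotient of `G'` into which `G` embeds (compatibly with `G → G' → H`),
then `scott(G) ≥ scott(H)`. -/
theorem scott_decreases_under_adjoining_roots
    (G : Type) [Group G] [Group.FG G]
    (nn : ℕ) (γ : Fin nn → G) (k : Fin nn → ℕ)
    (hk : ∀ i, 2 ≤ k i)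
    (hind : ∀ i, Indivisible (γ i))
    (hconj : ∀ i j, i ≠ j → ¬ IsConj (γ i) (γ j) ∧ ¬ IsConj (γ i) (γ j)⁻¹)
    (H : Type) [Group H]
    (π : AdjoinRoots G γ k →* H) (hπ : Function.Surjective π)
    (ι : G →* H) (hι : Function.Injective ι)
    (hcomp : π.comp (adjoinRootsIncl G γ k) = ι) :
    ∀ a b a' b', HasScott H a b → HasScott G a' b' →
      ScottLE (a, b) (a', b') := by
  intro a b a' b' hH hG
  obtain ⟨r, ha, hHs⟩ := hH.hasSplit
  let s' : Fin nn → AdjoinRoots G γ k := fun i =>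
    QuotientGroup.mk' _ (Monoid.Coprod.inr (FreeGroup.of i))
  let s : Fin nn → H := fun i => π (s' i)
  have hιg : ∀ g, ι g = π (adjoinRootsIncl G γ k g) := fun g => by rw [← hcomp]; rfl
  have hsk : ∀ i, s i ^ k i = ι (γ i) := by
    intro i
    rw [hιg, ← map_pow]
    congr 1
    have h1 : (Monoid.Coprod.inr (FreeGroup.of i)) ^ (k i) * (Monoid.Coprod.inl (γ i))⁻¹ ∈
        Subgroup.normalClosure {x : Monoid.Coprod G (FreeGroup (Fin nn)) | ∃ i,
          x = (Monoid.Coprod.inr (FreeGroup.of i)) ^ (k i) * (Monoid.Coprod.inl (γ i))⁻¹} :=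
      Subgroup.subset_normalClosure ⟨i, rfl⟩
    have h2 := (QuotientGroup.eq_one_iff _).2 h1
    rw [QuotientGroup.mk_mul, QuotientGroup.mk_inv, mul_inv_eq_one] at h2
    exact h2
  have hγ : ∀ i, ¬ IsOfFinOrder (γ i) := by
    intro i h
    obtain ⟨m, hm, h1⟩ := isOfFinOrder_iff_pow_eq_one.1 h
    exact hind i (γ i) (m + 1) (by omega) (by rw [pow_succ, h1, one_mul])
  have hso : ∀ i, ¬ IsOfFinOrder (s i) := by
    intro i h
    have h1 : IsOfFinOrder (ι (γ i)) := by rw [← hsk]; exact h.pow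
    exact hγ i (hι.isOfFinOrder_iff.1 h1)
  have hgen : Subgroup.closure ((ι.range : Set H) ∪ Set.range s) = ⊤ := by
    let q : Monoid.Coprod G (FreeGroup (Fin nn)) →* H := π.comp (QuotientGroup.mk' _)
    have hq : Function.Surjective q := hπ.comp (QuotientGroup.mk'_surjective _)
    rw [eq_top_iff]
    rintro h -
    obtain ⟨z, rfl⟩ := hq h
    have hl : ∀ g : G, q (Monoid.Coprod.inl g) ∈
        Subgroup.closure ((ι.range : Set H) ∪ Set.range s) := fun g =>
      Subgroup.subset_closure (Or.inl ⟨g, hιg g⟩)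
    have hr : ∀ w : FreeGroup (Fin nn), q (Monoid.Coprod.inr w) ∈
        Subgroup.closure ((ι.range : Set H) ∪ Set.range s) := by
      intro w
      induction w using FreeGroup.induction_on with
      | C1 => simp [one_mem]
      | of i => exact Subgroup.subset_closure (Or.inr ⟨i, rfl⟩)
      | inv_of i ih => rw [map_inv, map_inv]; exact inv_mem ih
      | mul v w hv hw => rw [map_mul, map_mul]; exact mul_mem hv hw
    induction z using Monoid.Coprod.induction_on with
    | inl g => exact hl g
    | inr w => exact hr w
    | mul v w hv hw => rw [map_mul]; exact mul_mem hv hw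
  obtain ⟨q1, p1, h1, h2⟩ := chain hHs nn G ι hι s k (fun i => by have := hk i; omega)
    (fun i => ⟨γ i, (hsk i).symm⟩) hgen hso
  obtain ⟨q, ha', h3⟩ := grushko_max hG h1
  have h4 := h2.trans h3
  unfold LexLE at h4
  unfold ScottLE
  simp only
  omega
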